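/- There exists a constant C > 0 such that for every finite field F, writing q = |F| and G = SL₂(F), the number of ordered pairs (x, y) ∈ G × G such that {x, y} invariably generates G differs from |G|²/2 by at most C·|G|²/q. -/

import Mathlib

/-- `{x, y}` invariably generates `G`: for all `g, h`, the conjugates
`g * x * g⁻¹` and `h * y * h⁻¹` generate `G`. -/
def InvGen {G : Type*} [Group G] (x y : G) : Prop :=
  ∀ g h : G, Subgroup.closure {g * x * g⁻¹, h * y * h⁻¹} = ⊤

set_option linter.unusedSectionVars false
namespace IG
open Set

section abs
variable {Γ : Type*} [Group Γ] [Finite Γ]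

lemma dc (D W : Set Γ) (m : ℕ) (hD : ∀ d ∈ D, ∀ h : Γ, h * d * h⁻¹ ∈ W)
    (hW : ∀ w ∈ W, {h : Γ | h⁻¹ * w * h ∈ D}.ncard = m) :
    Nat.card Γ * D.ncard = W.ncard * m := by
  classical
  have := Fintype.ofFinite Γ
  have key := Finset.sum_card_bipartiteAbove_eq_sum_card_bipartiteBelow
    (s := (Finset.univ : Finset Γ)) (t := W.toFinset) (fun h w => h⁻¹ * w * h ∈ D)
  have h1 : ∀ h ∈ (Finset.univ : Finset Γ),
      (Finset.bipartiteAbove (fun h w => h⁻¹ * w * h ∈ D) W.toFinset h).card = D.ncard := by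
    intro h _
    rw [← Set.ncard_coe_finset]
    have : ((Finset.bipartiteAbove (fun h w => h⁻¹ * w * h ∈ D) W.toFinset h : Finset Γ) : Set Γ)
        = (fun d => h * d * h⁻¹) '' D := by
      ext w
      simp only [Finset.bipartiteAbove, Finset.coe_filter, Set.mem_toFinset, Set.mem_ofPred_eq,
        Set.mem_image]
      constructor
      · rintro ⟨_, h2⟩
        exact ⟨_, h2, by group⟩
      · rintro ⟨d, hd, rfl⟩
        refine ⟨hD d hd h, ?_⟩
        convert hd using 1
        group
    rw [this]
    apply Set.ncard_image_of_injective
    intro a b hab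
    simpa using hab
  have h2 : ∀ w ∈ W.toFinset,
      (Finset.bipartiteBelow (fun h w => h⁻¹ * w * h ∈ D) (Finset.univ : Finset Γ) w).card = m := by
    intro w hw
    rw [← hW w (by simpa using hw), ← Set.ncard_coe_finset]
    congr 1
    ext h
    simp [Finset.bipartiteBelow]
  rw [Finset.sum_congr rfl h1, Finset.sum_congr rfl h2] at key
  simp only [Finset.sum_const, smul_eq_mul, Finset.card_univ] at key
  rw [Nat.card_eq_fintype_card, key, Set.ncard_eq_toFinset_card']

noncomputable def cen (x : Γ) : ℕ := Nat.card (Subgroup.centralizer ({x} : Set Γ))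

lemma mem_cen {x g : Γ} : g ∈ Subgroup.centralizer ({x} : Set Γ) ↔ Commute g x := by
  rw [Subgroup.mem_centralizer_singleton_iff]
  exact Iff.rfl

lemma cen_coset (x h0 : Γ) : {h : Γ | h * x * h⁻¹ = h0 * x * h0⁻¹}.ncard = cen x := by
  have : {h : Γ | h * x * h⁻¹ = h0 * x * h0⁻¹}
      = (fun d => h0 * d) '' (Subgroup.centralizer ({x} : Set Γ) : Set Γ) := by
    ext h
    simp only [Set.mem_ofPred_eq, Set.mem_image, SetLike.mem_coe, mem_cen]
    constructor
    · intro e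
      refine ⟨h0⁻¹ * h, ?_, by group⟩
      show h0⁻¹ * h * x = x * (h0⁻¹ * h)
      calc h0⁻¹ * h * x = h0⁻¹ * (h * x * h⁻¹) * h := by group
        _ = _ := by rw [e]; group
    · rintro ⟨d, hd, rfl⟩
      have hd' : d * x = x * d := hd
      calc h0 * d * x * (h0 * d)⁻¹ = h0 * (d * x) * d⁻¹ * h0⁻¹ := by group
        _ = _ := by rw [hd']; group
  rw [this, Set.ncard_image_of_injective _ (mul_right_injective h0)]
  rfl

/-- centralizers outside `Z` are abelian -/
structure CT (Z : Subgroup Γ) : Prop where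
  central : ∀ z ∈ Z, ∀ g, Commute z g
  ct : ∀ s, s ∉ Z → ∀ a b : Γ, Commute a s → Commute b s → Commute a b

structure Good (Z : Subgroup Γ) (x : Γ) : Prop where
  nz : x ∉ Z
  two : ∀ h, Commute (h * x * h⁻¹) x → h * x * h⁻¹ = x ∨ h * x * h⁻¹ = x⁻¹
  ne : x ≠ x⁻¹

def A (Z : Subgroup Γ) (x : Γ) : Set Γ := {s | s ∉ Z ∧ ∃ h, Commute s (h * x * h⁻¹)}

lemma conj_comm {a b h : Γ} : Commute (h * a * h⁻¹) (h * b * h⁻¹) ↔ Commute a b :=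
  Commute.conj_iff h

variable {Z : Subgroup Γ}

lemma cen_split (hZ : CT Z) (x : Γ) :
    cen x = {s | s ∉ Z ∧ Commute s x}.ncard + Nat.card Z := by
  have h1 : (Subgroup.centralizer ({x} : Set Γ) : Set Γ) = {s | s ∉ Z ∧ Commute s x} ∪ (Z : Set Γ) := by
    ext s
    simp only [SetLike.mem_coe, mem_cen, Set.mem_union, Set.mem_ofPred_eq]
    constructor
    · intro h
      by_cases hs : s ∈ Z
      · exact Or.inr hs
      · exact Or.inl ⟨hs, h⟩
    · rintro (h | h)
      · exact h.2
      · exact hZ.central s h x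
  have h2 : cen x = (Subgroup.centralizer ({x} : Set Γ) : Set Γ).ncard := rfl
  rw [h2, h1, Set.ncard_union_eq]
  · rfl
  · rw [Set.disjoint_left]
    rintro a ⟨ha, _⟩ hb
    exact ha hb

lemma conj_notin (hZ : CT Z) {s h : Γ} : h * s * h⁻¹ ∉ Z ↔ s ∉ Z := by
  have key : ∀ s h : Γ, s ∈ Z → h * s * h⁻¹ ∈ Z := by
    intro s h hs
    have : h * s = s * h := (hZ.central s hs h).symm
    rw [this]; simpa using hs
  rw [not_iff_not]
  refine ⟨fun hh => ?_, key s h⟩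
  have := key _ h⁻¹ hh
  convert this using 1
  group

lemma cardA (hZ : CT Z) {x : Γ} (hx : Good Z x) :
    ((∃ k, k * x * k⁻¹ = x⁻¹) → Nat.card Γ * cen x = 2 * (A Z x).ncard * cen x
      + Nat.card Γ * Nat.card Z) ∧
    ((¬ ∃ k, k * x * k⁻¹ = x⁻¹) → Nat.card Γ * cen x = (A Z x).ncard * cen x
      + Nat.card Γ * Nat.card Z) := by
  have h0 := cen_split hZ x
  have hD : ∀ d ∈ {s | s ∉ Z ∧ Commute s x}, ∀ h : Γ, h * d * h⁻¹ ∈ A Z x := by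
    rintro d ⟨h1, h2⟩ h
    exact ⟨(conj_notin hZ).2 h1, h, conj_comm.2 h2⟩
  have hset : ∀ w ∈ A Z x, ∃ h0 : Γ, {h : Γ | h⁻¹ * w * h ∈ {s | s ∉ Z ∧ Commute s x}} =
      {h | h * x * h⁻¹ = h0 * x * h0⁻¹} ∪ {h | h * x * h⁻¹ = h0 * x⁻¹ * h0⁻¹} := by
    rintro w ⟨hw, h0, hc⟩
    refine ⟨h0, ?_⟩
    ext h
    have e1 : h⁻¹ * w * h ∉ Z := by
      have := (conj_notin hZ (s := w) (h := h⁻¹)).2 hw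
      simpa using this
    have e2 : Commute (h⁻¹ * w * h) x ↔ Commute w (h * x * h⁻¹) := by
      rw [← conj_comm (h := h)]
      have : h * (h⁻¹ * w * h) * h⁻¹ = w := by group
      rw [this]
    simp only [Set.mem_ofPred_eq, Set.mem_union, e1, not_false_eq_true, true_and, e2]
    constructor
    · intro hh
      have c1 := hZ.ct w hw _ _ hh.symm hc.symm
      rw [← conj_comm (h := h0⁻¹)] at c1
      have e3 : h0⁻¹ * (h0 * x * h0⁻¹) * h0⁻¹⁻¹ = x := by group
      have e4 : h0⁻¹ * (h * x * h⁻¹) * h0⁻¹⁻¹ = (h0⁻¹ * h) * x * (h0⁻¹ * h)⁻¹ := by group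
      rw [e3, e4] at c1
      rcases hx.two _ c1 with e | e
      · left
        rw [← e4] at e
        calc h * x * h⁻¹ = h0 * (h0⁻¹ * (h * x * h⁻¹) * h0⁻¹⁻¹) * h0⁻¹ := by group
          _ = _ := by rw [e]
      · right
        rw [← e4] at e
        calc h * x * h⁻¹ = h0 * (h0⁻¹ * (h * x * h⁻¹) * h0⁻¹⁻¹) * h0⁻¹ := by group
          _ = _ := by rw [e]
    · rintro (e | e)
      · rw [e]; exact hc
      · rw [e]
        have : h0 * x⁻¹ * h0⁻¹ = (h0 * x * h0⁻¹)⁻¹ := by group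
        rw [this]; exact hc.inv_right
  constructor
  · rintro ⟨k, hk⟩
    have := dc _ (A Z x) (2 * cen x) hD (by
      intro w hw
      obtain ⟨h0, e⟩ := hset w hw
      rw [e, Set.ncard_union_eq]
      · have : h0 * x⁻¹ * h0⁻¹ = (h0 * k) * x * (h0 * k)⁻¹ := by rw [← hk]; group
        rw [this, cen_coset, cen_coset]; ring
      · rw [Set.disjoint_left]
        intro a h1 h2
        simp only [Set.mem_ofPred_eq] at h1 h2
        rw [h1] at h2
        exact hx.ne (by simpa using h2))
    rw [h0] at this ⊢
    linarith
  · intro hk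
    have := dc _ (A Z x) (cen x) hD (by
      intro w hw
      obtain ⟨h0, e⟩ := hset w hw
      have : {h | h * x * h⁻¹ = h0 * x⁻¹ * h0⁻¹} = ∅ := by
        ext h
        simp only [Set.mem_ofPred_eq, Set.mem_empty_iff_false, iff_false]
        intro e
        apply hk
        refine ⟨h0⁻¹ * h, ?_⟩
        calc h0⁻¹ * h * x * (h0⁻¹ * h)⁻¹ = h0⁻¹ * (h * x * h⁻¹) * h0 := by group
          _ = _ := by rw [e]; group
      rw [e, this, Set.union_empty, cen_coset])
    rw [h0] at this ⊢
    linarith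

lemma cardA_le (hZ : CT Z) {x : Γ} (hx : Good Z x) :
    Nat.card Γ * cen x ≤ 2 * (A Z x).ncard * cen x + Nat.card Γ * Nat.card Z := by
  have := cardA hZ hx
  by_cases h : ∃ k, k * x * k⁻¹ = x⁻¹
  · exact (this.1 h).le
  · have := this.2 h
    nlinarith [Nat.zero_le ((A Z x).ncard * cen x)]

lemma two_le_cen (hZ : CT Z) {x : Γ} (hx : x ∉ Z) : 2 * Nat.card Z ≤ cen x := by
  have hle : Z ≤ Subgroup.centralizer ({x} : Set Γ) := fun z hz => mem_cen.2 (hZ.central z hz x)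
  have hd : Nat.card Z ∣ cen x := Subgroup.card_dvd_of_le hle
  have hlt : Nat.card Z < cen x := by
    rcases lt_or_eq_of_le (Nat.le_of_dvd (Nat.card_pos) hd) with h | h
    · exact h
    · exfalso
      have := Subgroup.eq_of_le_of_card_ge hle h.ge
      apply hx
      rw [this, mem_cen]
  obtain ⟨c, hc⟩ := hd
  have hz : 0 < Nat.card Z := Nat.card_pos
  rw [hc] at hlt ⊢
  have : 1 < c := by
    by_contra hh
    have : c ≤ 1 := by omega
    nlinarith
  nlinarith

lemma A_disj (hZ : CT Z) {x y : Γ} (h : ∀ h, ¬ Commute y (h * x * h⁻¹)) :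
    Disjoint (A Z x) (A Z y) := by
  rw [Set.disjoint_left]
  rintro s ⟨hs, a, ha⟩ ⟨_, b, hb⟩
  have := hZ.ct s hs _ _ hb.symm ha.symm
  rw [← conj_comm (h := b⁻¹)] at this
  apply h (b⁻¹ * a)
  convert this using 1 <;> group

lemma absMain (hZ : CT Z) {x y : Γ} (hx : Good Z x) (hy : Good Z y)
    (hxy : ∀ h, ¬ Commute y (h * x * h⁻¹)) (hcx : 20 * Nat.card Z ≤ cen x)
    (hcy : 20 * Nat.card Z ≤ cen y) :
    (∀ s, Good Z s → s ∈ A Z x ∨ s ∈ A Z y) ∧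
    (∃ k, k * x * k⁻¹ = x⁻¹) ∧
    Nat.card Γ * cen x = 2 * (A Z x).ncard * cen x + Nat.card Γ * Nat.card Z ∧
    Nat.card Γ * cen y = 2 * (A Z y).ncard * cen y + Nat.card Γ * Nat.card Z ∧
    Nat.card Γ * 19 ≤ 20 * ((A Z x).ncard + (A Z y).ncard) := by
  have hz : 0 < Nat.card Z := Nat.card_pos
  have hn : 0 < Nat.card Γ := Nat.card_pos
  set n := Nat.card Γ
  set z := Nat.card Z
  have hnA : ∀ S : Set Γ, S.ncard ≤ n := fun S => Set.ncard_le_card S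
  have low : ∀ {x : Γ}, Good Z x → 20 * z ≤ cen x → n * 19 ≤ 40 * (A Z x).ncard := by
    intro x hx hc
    have := cardA_le hZ hx
    have hp : 0 < cen x := by omega
    have : n * 19 * cen x ≤ 40 * (A Z x).ncard * cen x := by
      have := Nat.mul_le_mul_left n hc
      nlinarith
    exact Nat.le_of_mul_le_mul_right this hp
  have big : ∀ {x : Γ}, Good Z x → 20 * z ≤ cen x → (¬ ∃ k, k * x * k⁻¹ = x⁻¹) →
      n * 19 ≤ 20 * (A Z x).ncard := by
    intro x hx hc hk
    have := (cardA hZ hx).2 hk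
    have hp : 0 < cen x := by omega
    have : n * 19 * cen x ≤ 20 * (A Z x).ncard * cen x := by
      have := Nat.mul_le_mul_left n hc
      nlinarith
    exact Nat.le_of_mul_le_mul_right this hp
  have hdis := A_disj hZ hxy
  have hsum : (A Z x).ncard + (A Z y).ncard ≤ n := by
    rw [← Set.ncard_union_eq hdis]; exact hnA _
  have lx := low hx hcx
  have ly := low hy hcy
  have kx : ∃ k, k * x * k⁻¹ = x⁻¹ := by
    by_contra hk
    have := big hx hcx hk
    omega
  have ky : ∃ k, k * y * k⁻¹ = y⁻¹ := by
    by_contra hk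
    have := big hy hcy hk
    omega
  refine ⟨?_, kx, (cardA hZ hx).1 kx, (cardA hZ hy).1 ky, by omega⟩
  intro s hs
  by_contra hcon
  push Not at hcon
  have d1 : Disjoint (A Z s) (A Z x) := by
    have : ∀ h, ¬ Commute x (h * s * h⁻¹) := by
      intro h hh
      apply hcon.1
      refine ⟨hs.nz, h⁻¹, ?_⟩
      rw [← conj_comm (h := h)]
      have : h * (h⁻¹ * x * h⁻¹⁻¹) * h⁻¹ = x := by group
      rw [this]; exact hh.symm
    exact A_disj hZ this
  have d2 : Disjoint (A Z s) (A Z y) := by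
    have : ∀ h, ¬ Commute y (h * s * h⁻¹) := by
      intro h hh
      apply hcon.2
      refine ⟨hs.nz, h⁻¹, ?_⟩
      rw [← conj_comm (h := h)]
      have : h * (h⁻¹ * y * h⁻¹⁻¹) * h⁻¹ = y := by group
      rw [this]; exact hh.symm
    exact A_disj hZ this
  have ls : n ≤ 4 * (A Z s).ncard := by
    have := cardA_le hZ hs
    have h2 := two_le_cen hZ hs.nz
    have hp : 0 < cen s := by omega
    have : n * cen s ≤ 4 * (A Z s).ncard * cen s := by
      have := Nat.mul_le_mul_left n h2
      nlinarith
    exact Nat.le_of_mul_le_mul_right this hp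
  have : (A Z s ∪ (A Z x ∪ A Z y)).ncard ≤ n := hnA _
  rw [Set.ncard_union_eq (by simp [d1, d2]), Set.ncard_union_eq hdis] at this
  omega

/-- unipotent counting -/
lemma cardU (U : Set Γ) (B : Subgroup Γ) (hU : ∀ u ∈ U, ∀ h : Γ, h * u * h⁻¹ ∈ U)
    (hB : ∀ u ∈ U, u ∈ B → ∀ h : Γ, h⁻¹ * u * h ∈ B → h ∈ B)
    (hc : ∀ u ∈ U, ∃ h : Γ, h⁻¹ * u * h ∈ B) :
    Nat.card Γ * (U ∩ B).ncard = U.ncard * Nat.card B := by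
  refine dc (U ∩ B) U (Nat.card B) (fun d hd h => hU d hd.1 h) ?_
  intro u hu
  obtain ⟨h0, h1⟩ := hc u hu
  have : {h : Γ | h⁻¹ * u * h ∈ U ∩ (B : Set Γ)} = (fun d => h0 * d) '' (B : Set Γ) := by
    ext h
    simp only [Set.mem_ofPred_eq, Set.mem_inter_iff, SetLike.mem_coe, Set.mem_image]
    constructor
    · rintro ⟨_, h3⟩
      refine ⟨h0⁻¹ * h, ?_, by group⟩
      refine hB (h0⁻¹ * u * h0) ?_ h1 _ ?_
      · simpa using hU u hu h0⁻¹
      · convert h3 using 1; group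
    · rintro ⟨d, hd, rfl⟩
      refine ⟨by simpa using hU u hu (h0 * d)⁻¹, ?_⟩
      have := B.mul_mem (B.mul_mem (B.inv_mem hd) h1) hd
      convert this using 1; group
  rw [this, Set.ncard_image_of_injective _ (mul_right_injective h0)]
  rfl

end abs
end IG

set_option linter.unusedSectionVars false
set_option linter.unusedSimpArgs false
namespace IG
open Matrix

section conc
variable {F : Type*} [Field F]

local notation "SL" => Matrix.SpecialLinearGroup (Fin 2) F

lemma det_eq (M : SL) : M 0 0 * M 1 1 - M 0 1 * M 1 0 = 1 := by
  have := M.2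
  rwa [Matrix.det_fin_two] at this

lemma sl_ext {M N : SL} (h00 : M 0 0 = N 0 0) (h01 : M 0 1 = N 0 1) (h10 : M 1 0 = N 1 0)
    (h11 : M 1 1 = N 1 1) : M = N := by
  apply Matrix.SpecialLinearGroup.ext
  intro i j
  fin_cases i <;> fin_cases j <;> assumption

lemma mul_ap (M N : SL) (i j : Fin 2) : (M * N) i j = M i 0 * N 0 j + M i 1 * N 1 j := by
  rw [Matrix.SpecialLinearGroup.coe_mul, Matrix.mul_apply, Fin.sum_univ_two]

lemma inv00 (M : SL) : M⁻¹ 0 0 = M 1 1 := by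
  simp [Matrix.SpecialLinearGroup.coe_inv, Matrix.adjugate_fin_two]
lemma inv01 (M : SL) : M⁻¹ 0 1 = - M 0 1 := by
  simp [Matrix.SpecialLinearGroup.coe_inv, Matrix.adjugate_fin_two]
lemma inv10 (M : SL) : M⁻¹ 1 0 = - M 1 0 := by
  simp [Matrix.SpecialLinearGroup.coe_inv, Matrix.adjugate_fin_two]
lemma inv11 (M : SL) : M⁻¹ 1 1 = M 0 0 := by
  simp [Matrix.SpecialLinearGroup.coe_inv, Matrix.adjugate_fin_two]
lemma one00 : (1 : SL) 0 0 = 1 := by simp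
lemma one01 : (1 : SL) 0 1 = 0 := by simp
lemma one10 : (1 : SL) 1 0 = 0 := by simp
lemma one11 : (1 : SL) 1 1 = 1 := by simp

def mk (a b c d : F) (h : a * d - b * c = 1) : SL :=
  ⟨!![a, b; c, d], by rw [Matrix.det_fin_two]; simpa using h⟩
@[simp] lemma mk00 (a b c d : F) (h) : (mk a b c d h) 0 0 = a := rfl
@[simp] lemma mk01 (a b c d : F) (h) : (mk a b c d h) 0 1 = b := rfl
@[simp] lemma mk10 (a b c d : F) (h) : (mk a b c d h) 1 0 = c := rfl
@[simp] lemma mk11 (a b c d : F) (h) : (mk a b c d h) 1 1 = d := rfl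

def tr (M : SL) : F := M 0 0 + M 1 1

lemma tr_conj (g M : SL) : tr (g * M * g⁻¹) = tr M := by
  have := det_eq g
  simp only [tr, mul_ap, inv00, inv01, inv10, inv11]
  linear_combination (M 0 0 + M 1 1) * this

lemma tr_conj' (g M : SL) : tr (g⁻¹ * M * g) = tr M := by
  have := tr_conj g⁻¹ M
  simpa using this

lemma comm_iff (M s : SL) : Commute M s ↔ M 0 1 * s 1 0 = M 1 0 * s 0 1 ∧
    M 0 1 * (s 1 1 - s 0 0) = s 0 1 * (M 1 1 - M 0 0) ∧
    M 1 0 * (s 1 1 - s 0 0) = s 1 0 * (M 1 1 - M 0 0) := by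
  constructor
  · intro h
    have h : M * s = s * M := h
    have e : ∀ i j, (M * s) i j = (s * M) i j := fun i j => by rw [h]
    have e00 := e 0 0
    have e01 := e 0 1
    have e10 := e 1 0
    simp only [mul_ap] at e00 e01 e10
    refine ⟨by linear_combination e00, by linear_combination e01, by linear_combination -e10⟩
  · rintro ⟨h1, h2, h3⟩
    show M * s = s * M
    apply sl_ext <;> simp only [mul_ap]
    · linear_combination h1
    · linear_combination h2
    · linear_combination -h3
    · linear_combination -h1

def Zg (F : Type*) [Field F] : Subgroup (Matrix.SpecialLinearGroup (Fin 2) F) where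
  carrier := {M | M 0 1 = 0 ∧ M 1 0 = 0 ∧ M 0 0 = M 1 1}
  mul_mem' := by
    rintro a b ⟨h1, h2, h3⟩ ⟨h4, h5, h6⟩
    refine ⟨?_, ?_, ?_⟩ <;> simp only [mul_ap] <;> simp [h1, h2, h3, h4, h5, h6]
  one_mem' := by simp
  inv_mem' := by
    rintro a ⟨h1, h2, h3⟩
    refine ⟨?_, ?_, ?_⟩ <;> simp only [inv00, inv01, inv10, inv11] <;> simp [h1, h2, h3]

lemma mem_Zg {M : SL} : M ∈ Zg F ↔ M 0 1 = 0 ∧ M 1 0 = 0 ∧ M 0 0 = M 1 1 := Iff.rfl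

lemma Zg_central {M : SL} (h : M ∈ Zg F) (s : SL) : Commute M s := by
  obtain ⟨h1, h2, h3⟩ := h
  rw [comm_iff]; simp [h1, h2, h3]

/-- commuting with a noncentral `s` : proportional -/
lemma prop_of_comm {M s : SL} (hs : s ∉ Zg F) (h : Commute M s) :
    ∃ l : F, M 0 1 = l * s 0 1 ∧ M 1 0 = l * s 1 0 ∧ M 1 1 - M 0 0 = l * (s 1 1 - s 0 0) := by
  rw [comm_iff] at h
  obtain ⟨h1, h2, h3⟩ := h
  by_cases c1 : s 0 1 = 0
  · by_cases c2 : s 1 0 = 0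
    · have c3 : s 1 1 - s 0 0 ≠ 0 := by
        intro c3
        exact hs ⟨c1, c2, by linear_combination -c3⟩
      refine ⟨(M 1 1 - M 0 0) / (s 1 1 - s 0 0), ?_, ?_, ?_⟩
      · field_simp; linear_combination h2
      · field_simp; linear_combination h3
      · field_simp
    · refine ⟨M 1 0 / s 1 0, ?_, ?_, ?_⟩
      · field_simp; linear_combination h1
      · field_simp
      · field_simp; linear_combination -h3
  · refine ⟨M 0 1 / s 0 1, ?_, ?_, ?_⟩
    · field_simp
    · field_simp; linear_combination -h1
    · field_simp; linear_combination -h2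

lemma ct_G {s : SL} (hs : s ∉ Zg F) {a b : SL} (ha : Commute a s) (hb : Commute b s) :
    Commute a b := by
  obtain ⟨l, h1, h2, h3⟩ := prop_of_comm hs ha
  obtain ⟨m, k1, k2, k3⟩ := prop_of_comm hs hb
  rw [comm_iff, h1, h2, h3, k1, k2, k3]
  refine ⟨by ring, by ring, by ring⟩

lemma disc_eq (M : SL) : tr M ^ 2 - 4 = (M 1 1 - M 0 0) ^ 2 + 4 * (M 0 1 * M 1 0) := by
  have := det_eq M
  simp only [tr]
  linear_combination 4 * this

lemma reg_of_comm {M s : SL} (hs : s ∉ Zg F) (h : Commute M s) (hM : tr M ^ 2 ≠ 4) :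
    tr s ^ 2 ≠ 4 := by
  obtain ⟨l, h1, h2, h3⟩ := prop_of_comm hs h
  intro hh
  apply hM
  have e1 := disc_eq M
  have e2 := disc_eq s
  rw [h1, h2, h3] at e1
  linear_combination e1 - l ^ 2 * e2 + l ^ 2 * hh

lemma notZ_of_reg {M : SL} (hM : tr M ^ 2 ≠ 4) : M ∉ Zg F := by
  rintro ⟨h1, h2, h3⟩
  apply hM
  have := disc_eq M
  rw [h1, h3] at this
  linear_combination this

lemma two_G {M N : SL} (hM : tr M ^ 2 ≠ 4) (ht : tr N = tr M) (h : Commute N M) :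
    N = M ∨ N = M⁻¹ := by
  obtain ⟨l, h1, h2, h3⟩ := prop_of_comm (notZ_of_reg hM) h
  have e1 := disc_eq M
  have e2 := disc_eq N
  rw [h1, h2, h3, ht] at e2
  have hl : (l - 1) * (l + 1) = 0 := by
    have : (tr M ^ 2 - 4) * ((l - 1) * (l + 1)) = 0 := by linear_combination -e2 + l ^ 2 * e1
    rcases mul_eq_zero.1 this with h | h
    · exact absurd (by linear_combination h) hM
    · exact h
  have d1 := det_eq M
  have d2 := det_eq N
  simp only [tr] at ht
  rcases mul_eq_zero.1 hl with hl | hl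
  · have hl : l = 1 := by linear_combination hl
    subst hl
    have f1 : N 1 1 = M 1 1 + (N 0 0 - M 0 0) := by linear_combination h3
    rw [h1, h2] at d2
    have f2 : (N 0 0 - M 0 0) * (N 0 0 - M 1 1) = 0 := by
      have f3 : 2 * (N 0 0 - M 0 0) = 0 := by linear_combination ht - f1
      rw [f1] at d2
      linear_combination d2 - d1 + (- M 1 1) * f3
    rcases mul_eq_zero.1 f2 with f | f
    · left
      apply sl_ext
      · linear_combination f
      · rw [h1]; ring
      · rw [h2]; ring
      · linear_combination f1 + f
    · have g2 : (2 : F) * (M 1 1 - M 0 0) = 0 := by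
        linear_combination ht - f1 - 2 * f
      rcases mul_eq_zero.1 g2 with g | g
      · right
        apply sl_ext <;> simp only [inv00, inv01, inv10, inv11]
        · linear_combination f
        · rw [h1]; linear_combination M 0 1 * g
        · rw [h2]; linear_combination M 1 0 * g
        · linear_combination ht - f
      · left
        apply sl_ext
        · linear_combination f + g
        · rw [h1]; ring
        · rw [h2]; ring
        · linear_combination f1 + f + g
  · have hl : l = -1 := by linear_combination hl
    subst hl
    have f1 : N 1 1 = N 0 0 + M 0 0 - M 1 1 := by linear_combination h3
    have f3 : 2 * (N 0 0 - M 1 1) = 0 := by linear_combination ht - f1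
    have f2 : (N 0 0 - M 1 1) * (N 0 0 - M 0 0) = 0 := by
      rw [h1, h2, f1] at d2
      linear_combination d2 - d1 - M 0 0 * f3
    rcases mul_eq_zero.1 f2 with f | f
    · right
      apply sl_ext <;> simp only [inv00, inv01, inv10, inv11]
      · linear_combination f
      · rw [h1]; ring
      · rw [h2]; ring
      · linear_combination ht - f
    · have g2 : (2 : F) * (M 0 0 - M 1 1) = 0 := by linear_combination f3 - 2 * f
      rcases mul_eq_zero.1 g2 with g | g
      · left
        apply sl_ext
        · linear_combination f
        · rw [h1]; linear_combination (-M 0 1) * g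
        · rw [h2]; linear_combination (-M 1 0) * g
        · linear_combination ht - f
      · right
        apply sl_ext <;> simp only [inv00, inv01, inv10, inv11]
        · linear_combination f + g
        · rw [h1]; ring
        · rw [h2]; ring
        · linear_combination ht - f - g

lemma ne_inv_G {M : SL} (hM : tr M ^ 2 ≠ 4) : M ≠ M⁻¹ := by
  intro h
  have e : ∀ i j, M i j = M⁻¹ i j := fun i j => by rw [← h]
  have e0 := e 0 0
  have e1 := e 0 1
  rw [inv00] at e0
  rw [inv01] at e1
  apply hM
  have := disc_eq M
  rw [e0] at this
  linear_combination this + 2 * M 1 0 * e1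

/-- split -/
def Spl (M : SL) : Prop := ∃ a : F, a ^ 2 - tr M * a + 1 = 0

lemma exists_tri {M : SL} {a : F} (h : a ^ 2 - tr M * a + 1 = 0) :
    ∃ g : SL, (g⁻¹ * M * g) 1 0 = 0 ∧ (g⁻¹ * M * g) 0 0 = a := by
  have d := det_eq M
  simp only [tr] at h
  by_cases c : M 1 0 = 0
  · rw [c] at d
    have : (a - M 0 0) * (a - M 1 1) = 0 := by linear_combination h + d
    by_cases c1 : a - M 0 0 = 0
    · refine ⟨1, by simpa using c, ?_⟩
      simp
      linear_combination -c1
    · have c2 : a - M 1 1 = 0 := (mul_eq_zero.1 this).resolve_left c1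
      refine ⟨mk (M 0 1) (-(a - M 0 0)⁻¹) (a - M 0 0) 0 (by field_simp; ring), ?_, ?_⟩
      · simp only [mul_ap, inv00, inv01, inv10, inv11, mk00, mk01, mk10, mk11, c]
        linear_combination (M 0 1 * (a - M 0 0)) * (-c2)
      · simp only [mul_ap, inv00, inv01, inv10, inv11, mk00, mk01, mk10, mk11, c]
        field_simp
        linear_combination (-(a - M 0 0)) * c2
  · refine ⟨mk (a - M 1 1) (-(M 1 0)⁻¹) (M 1 0) 0 (by field_simp; ring), ?_, ?_⟩
    · simp only [mul_ap, inv00, inv01, inv10, inv11, mk00, mk01, mk10, mk11]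
      linear_combination M 1 0 * (h + d)
    · simp only [mul_ap, inv00, inv01, inv10, inv11, mk00, mk01, mk10, mk11]
      field_simp
      ring

lemma spl_of_tri {M : SL} (h : M 1 0 = 0) : (M 0 0) ^ 2 - tr M * M 0 0 + 1 = 0 := by
  have d := det_eq M
  rw [h] at d
  simp only [tr]
  linear_combination -d

lemma tri_of_comm {M s : SL} (hs : s 1 0 = 0) (hs2 : s ∉ Zg F) (h : Commute M s) : M 1 0 = 0 := by
  obtain ⟨l, _, h2, _⟩ := prop_of_comm hs2 h
  rw [h2, hs, mul_zero]

lemma spl_conj {g M : SL} (h : Spl (g * M * g⁻¹)) : Spl M := by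
  simpa [Spl, tr_conj] using h

lemma spl_of_comm {M s : SL} (hs2 : s ∉ Zg F) (h : Commute M s) (hs : Spl s) : Spl M := by
  obtain ⟨a, ha⟩ := hs
  obtain ⟨g, hg, _⟩ := exists_tri ha
  have c : Commute (g⁻¹ * M * g) (g⁻¹ * s * g) := by
    have := Commute.conj_iff (a := M) (b := s) g⁻¹
    simp only [inv_inv] at this
    exact this.2 h
  have hz : g⁻¹ * s * g ∉ Zg F := by
    intro hz
    apply hs2
    have := Zg_central hz g⁻¹
    have e : s = g * (g⁻¹ * s * g) * g⁻¹ := by group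
    have e2 : g * (g⁻¹ * s * g) * g⁻¹ = g⁻¹ * s * g := by
      rw [mul_assoc, this.eq]; group
    rw [e, e2]; exact hz
  have := spl_of_tri (tri_of_comm hg hz c)
  rw [tr_conj'] at this
  exact ⟨_, this⟩

lemma spl_of_nonreg {M : SL} (h : tr M ^ 2 = 4) : Spl M := by
  have : (tr M - 2) * (tr M + 2) = 0 := by linear_combination h
  rcases mul_eq_zero.1 this with h | h
  · exact ⟨1, by linear_combination -h⟩
  · exact ⟨-1, by linear_combination h⟩

def Bor (F : Type*) [Field F] : Subgroup (Matrix.SpecialLinearGroup (Fin 2) F) where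
  carrier := {M | M 1 0 = 0}
  mul_mem' := by
    intro a b h1 h2
    simp only [Set.mem_ofPred_eq] at *
    simp [mul_ap, h1, h2]
  one_mem' := by simp
  inv_mem' := by
    intro a h1
    simp only [Set.mem_ofPred_eq] at *
    simp [inv10, h1]

lemma mem_Bor {M : SL} : M ∈ Bor F ↔ M 1 0 = 0 := Iff.rfl

lemma bor_det {M : SL} (h : M 1 0 = 0) : M 0 0 * M 1 1 = 1 := by
  have d := det_eq M
  rw [h] at d
  linear_combination d

def chi (F : Type*) [Field F] : Bor F →* Fˣ where
  toFun M := ⟨M.1 0 0, M.1 1 1, bor_det M.2, by rw [mul_comm]; exact bor_det M.2⟩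
  map_one' := by ext; simp
  map_mul' := by
    intro a b
    ext
    have : b.1 1 0 = 0 := b.2
    simp [mul_ap, this]

@[simp] lemma chi_val (M : Bor F) : (chi F M : F) = M.1 0 0 := rfl

lemma bor_nonreg {M : SL} (h : M 1 0 = 0) : tr M ^ 2 = 4 ↔ (M 0 0) ^ 2 = 1 := by
  have d := bor_det h
  have e := disc_eq M
  rw [h] at e
  have h0 : M 0 0 ≠ 0 := left_ne_zero_of_mul_eq_one d
  constructor
  · intro hh
    have : (M 1 1 - M 0 0) ^ 2 = 0 := by linear_combination hh - e
    have := pow_eq_zero_iff (two_ne_zero) |>.1 this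
    linear_combination d - M 0 0 * this
  · intro hh
    have : M 0 0 * (M 1 1 - M 0 0) = 0 := by linear_combination d - hh
    have := (mul_eq_zero.1 this).resolve_left h0
    rw [this] at e
    linear_combination e

lemma unip_uniq {u f : SL} (hu : u ∉ Zg F) (ht : tr u ^ 2 = 4) (h : u 1 0 = 0)
    (h2 : (f⁻¹ * u * f) 1 0 = 0) : f 1 0 = 0 := by
  have d := bor_det h
  have e := disc_eq u
  rw [h] at e
  have e1 : (u 1 1 - u 0 0) ^ 2 = 0 := by linear_combination ht - e
  have e2 := pow_eq_zero_iff (two_ne_zero) |>.1 e1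
  have hb : u 0 1 ≠ 0 := by
    intro hb
    exact hu ⟨hb, h, by linear_combination -e2⟩
  simp only [mul_ap, inv00, inv01, inv10, inv11, h] at h2
  have : u 0 1 * (f 1 0) ^ 2 = 0 := by linear_combination -h2 + (f 0 0 * f 1 0) * e2
  have := (mul_eq_zero.1 this).resolve_left hb
  exact pow_eq_zero_iff (two_ne_zero) |>.1 this

/-- generation from full root group -/
lemma gen_top (R : Subgroup SL) (hR : ∀ b : F, mk 1 b 0 1 (by ring) ∈ R) {Y : SL} (hY : Y ∈ R)
    (hc : Y 1 0 ≠ 0) : R = ⊤ := by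
  have d := det_eq Y
  have w : mk 0 (-(Y 1 0)⁻¹) (Y 1 0) 0 (by field_simp; ring) ∈ R := by
    have := R.mul_mem (R.mul_mem (hR (-(Y 0 0) / Y 1 0)) hY) (hR (-(Y 1 1) / Y 1 0))
    convert this using 1
    apply sl_ext <;> simp only [mul_ap, mk00, mk01, mk10, mk11] <;> field_simp
    · ring
    · linear_combination d
    · ring
    · ring
  have low : ∀ b : F, mk 1 0 b 1 (by ring) ∈ R := by
    intro b
    have := R.mul_mem (R.mul_mem w (hR (-b / (Y 1 0) ^ 2))) (R.inv_mem w)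
    convert this using 1
    apply sl_ext <;> simp only [mul_ap, mk00, mk01, mk10, mk11, inv00, inv01, inv10, inv11]
      <;> field_simp <;> ring
  have main : ∀ M : SL, M 1 0 ≠ 0 → M ∈ R := by
    intro M hM
    have d := det_eq M
    have := R.mul_mem (R.mul_mem (hR ((M 0 0 - 1) / M 1 0)) (low (M 1 0)))
      (hR ((M 1 1 - 1) / M 1 0))
    convert this using 1
    apply sl_ext <;> simp only [mul_ap, mk00, mk01, mk10, mk11] <;> field_simp
    · ring
    · linear_combination -d
    · ring
    · ring
  rw [eq_top_iff]
  intro M _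
  by_cases hM : M 1 0 = 0
  · have h1 := main (M * mk 1 0 1 1 (by ring)) (by
      simp only [mul_ap, mk00, mk10, hM]
      have := bor_det hM
      have := right_ne_zero_of_mul_eq_one this
      simpa using this)
    have := R.mul_mem h1 (R.inv_mem (low 1))
    simpa using this
  · exact main M hM

end conc
end IG

set_option linter.unusedSectionVars false
set_option linter.unusedSimpArgs false
set_option linter.unusedVariables false
namespace IG
open Matrix

section rep
variable {F : Type*} [Field F] [Finite F]
variable {Γ : Type*} [Group Γ] [Finite Γ]

local notation "SL" => Matrix.SpecialLinearGroup (Fin 2) F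

lemma sq_eq_one' {a : F} (h : a ^ 2 = 1) : a = 1 ∨ a = -1 := by
  rcases mul_eq_zero.1 (show (a - 1) * (a + 1) = 0 by linear_combination h) with h | h
  · left; linear_combination h
  · right; linear_combination h

lemma card_hom {A B : Type*} [Group A] [Group B] [Finite A] (f : A →* B) :
    Nat.card A = Nat.card f.ker * Nat.card f.range := by
  rw [← Subgroup.index_ker, Subgroup.card_mul_index]

abbrev Zr (ρ : Γ →* SL) : Subgroup Γ := (Zg F).comap ρ
abbrev Br (ρ : Γ →* SL) : Subgroup Γ := (Bor F).comap ρ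
def Ur (ρ : Γ →* SL) : Set Γ := {γ | ρ γ ∉ Zg F ∧ tr (ρ γ) ^ 2 = 4}
def chir (ρ : Γ →* SL) : Br ρ →* Fˣ := (chi F).comp (ρ.subgroupComap (Bor F))

@[simp] lemma chir_val (ρ : Γ →* SL) (b : Br ρ) : (chir ρ b : F) = ρ b.1 0 0 := rfl

lemma comm_rho {ρ : Γ →* SL} (hρ : Function.Injective ρ) {a b : Γ} :
    Commute (ρ a) (ρ b) ↔ Commute a b := by
  refine ⟨fun h => ?_, fun h => h.map ρ⟩
  apply hρ
  rw [map_mul, map_mul]; exact h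

lemma CTr {ρ : Γ →* SL} (hρ : Function.Injective ρ) : CT (Zr ρ) where
  central z hz g := (comm_rho hρ).1 (Zg_central hz _)
  ct s hs a b ha hb := (comm_rho hρ).1 (ct_G hs ((comm_rho hρ).2 ha) ((comm_rho hρ).2 hb))

lemma Goodr {ρ : Γ →* SL} (hρ : Function.Injective ρ) {s : Γ} (hs : tr (ρ s) ^ 2 ≠ 4) :
    Good (Zr ρ) s where
  nz := notZ_of_reg hs
  two h hc := by
    have := (comm_rho hρ).2 hc
    have ht : tr (ρ (h * s * h⁻¹)) = tr (ρ s) := by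
      rw [map_mul, map_mul, map_inv, tr_conj]
    rcases two_G hs ht this with e | e
    · left; exact hρ e
    · right; apply hρ; rw [e, map_inv]
  ne h := by
    apply ne_inv_G hs
    rw [← map_inv, ← h]

lemma borel (ρ : Γ →* SL) (hρ : Function.Injective ρ)
    (hm : ∃ ι, ρ ι = mk (-1) 0 0 (-1) (by ring)) :
    ∃ Q k s : ℕ, Nat.card (Br ρ) = Q * k ∧
      (Ur ρ ∩ (Br ρ : Set Γ)).ncard + Nat.card (Zr ρ) = Nat.card (Zr ρ) * Q ∧
      Q ∣ Nat.card F ∧ k ∣ Nat.card F - 1 ∧ k = s * Nat.card (Zr ρ) ∧ s ∣ Q - 1 ∧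
      (Q = Nat.card F → ∀ b : F, ∃ γ, ρ γ = mk 1 b 0 1 (by ring)) ∧
      (∀ h, ρ h 1 0 = 0 → (ρ h 0 0) ^ 2 ≠ 1 → cen h ≤ k) ∧
      (k ≠ Nat.card (Zr ρ) → ∃ h, ρ h 1 0 = 0 ∧ (ρ h 0 0) ^ 2 ≠ 1 ∧ k ≤ cen h) := by
  classical
  obtain ⟨ι, hι⟩ := hm
  have hB : ∀ b : Br ρ, ρ b.1 1 0 = 0 := fun b => b.2
  have hker : ∀ b : Br ρ, b ∈ (chir ρ).ker ↔ ρ b.1 0 0 = 1 := by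
    intro b
    rw [MonoidHom.mem_ker, Units.ext_iff]
    rfl
  have hker11 : ∀ b : Br ρ, b ∈ (chir ρ).ker → ρ b.1 1 1 = 1 := by
    intro b hb
    have := bor_det (hB b)
    rw [(hker b).1 hb] at this
    linear_combination this
  have ιB : ι ∈ Br ρ := by
    show ρ ι 1 0 = 0
    rw [hι]; rfl
  have ZB : Zr ρ ≤ Br ρ := fun z hz => hz.2.1
  have Zsq : ∀ z ∈ Zr ρ, (ρ z 0 0) ^ 2 = 1 := by
    intro z hz
    have := bor_det hz.2.1
    rw [← hz.2.2] at this
    linear_combination this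
  -- additive embedding
  let β : (chir ρ).ker →* Multiplicative F :=
    { toFun := fun b => Multiplicative.ofAdd (ρ b.1.1 0 1)
      map_one' := by simp
      map_mul' := by
        intro a b
        rw [← ofAdd_add]
        congr 1
        have h1 := (hker a.1).1 a.2
        have h2 := hker11 b.1 b.2
        simp only [Subgroup.coe_mul, map_mul, mul_ap, h1, h2]
        ring }
  have βv : ∀ b, (β b).toAdd = ρ b.1.1 0 1 := fun b => rfl
  have βinj : Function.Injective β := by
    intro a b hab
    have : ρ a.1.1 0 1 = ρ b.1.1 0 1 := hab
    apply Subtype.ext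
    apply Subtype.ext
    apply hρ
    apply sl_ext
    · rw [(hker a.1).1 a.2, (hker b.1).1 b.2]
    · exact this
    · rw [hB a.1, hB b.1]
    · rw [hker11 a.1 a.2, hker11 b.1 b.2]
  let φ : (chir ρ).range →* Fˣ := (powMonoidHom 2).comp (chir ρ).range.subtype
  have hφ : Nat.card φ.ker = Nat.card (Zr ρ) := by
    symm
    let f : Zr ρ → φ.ker := fun z => ⟨⟨chir ρ ⟨z.1, ZB z.2⟩, ⟨_, rfl⟩⟩, by
      rw [MonoidHom.mem_ker, Units.ext_iff]
      exact Zsq z.1 z.2⟩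
    apply Nat.card_congr (Equiv.ofBijective f ⟨?_, ?_⟩)
    · intro a b hab
      have h1 : chir ρ ⟨a.1, ZB a.2⟩ = chir ρ ⟨b.1, ZB b.2⟩ := by
        have := congrArg (fun t => t.1.1) hab
        exact this
      have h2 : ρ a.1 0 0 = ρ b.1 0 0 := congrArg Units.val h1
      apply Subtype.ext
      apply hρ
      obtain ⟨a1, a2, a3⟩ := a.2
      obtain ⟨b1, b2, b3⟩ := b.2
      apply sl_ext
      · exact h2
      · rw [a1, b1]
      · rw [a2, b2]
      · rw [← a3, ← b3]; exact h2
    · rintro ⟨⟨a, ha⟩, h2⟩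
      have h3 : (a : F) ^ 2 = 1 := by
        rw [MonoidHom.mem_ker, Units.ext_iff] at h2
        exact h2
      rcases sq_eq_one' h3 with h | h
      · refine ⟨1, ?_⟩
        apply Subtype.ext
        apply Subtype.ext
        apply Units.ext
        rw [h]
        show ρ (1 : Γ) 0 0 = 1
        simp
      · refine ⟨⟨ι, ?_⟩, ?_⟩
        · show ρ ι ∈ Zg F
          rw [hι]; exact ⟨rfl, rfl, rfl⟩
        · apply Subtype.ext
          apply Subtype.ext
          apply Units.ext
          rw [h]
          show ρ ι 0 0 = -1
          rw [hι]; rfl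
  refine ⟨Nat.card (chir ρ).ker, Nat.card (chir ρ).range, Nat.card φ.range, card_hom _, ?_, ?_, ?_,
    ?_, ?_, ?_, ?_, ?_⟩
  · -- U ∩ B
    let f : Zr ρ × (chir ρ).ker → Γ := fun p => p.1.1 * p.2.1.1
    have f00 : ∀ p, ρ (f p) 0 0 = ρ p.1.1 0 0 := by
      intro p
      have h1 := (hker p.2.1).1 p.2.2
      have h2 := hB p.2.1
      simp only [f, map_mul, mul_ap, h1, h2]
      ring
    have finj : Function.Injective f := by
      intro p r hpr
      have h1 : ρ p.1.1 0 0 = ρ r.1.1 0 0 := by rw [← f00, ← f00, hpr]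
      have h2 : p.1 = r.1 := by
        apply Subtype.ext
        apply hρ
        obtain ⟨a1, a2, a3⟩ := p.1.2
        obtain ⟨b1, b2, b3⟩ := r.1.2
        apply sl_ext
        · exact h1
        · rw [a1, b1]
        · rw [a2, b2]
        · rw [← a3, ← b3]; exact h1
      have h3 : p.1.1 * p.2.1.1 = r.1.1 * r.2.1.1 := hpr
      rw [h2] at h3
      have h4 := mul_left_cancel h3
      exact Prod.ext h2 (Subtype.ext (Subtype.ext h4))
    have hr : Set.range f = (Ur ρ ∩ (Br ρ : Set Γ)) ∪ (Zr ρ : Set Γ) := by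
      ext γ
      constructor
      · rintro ⟨p, rfl⟩
        by_cases hz : ρ (f p) ∈ Zg F
        · exact Or.inr hz
        · left
          have hb : f p ∈ Br ρ := (Br ρ).mul_mem (ZB p.1.2) p.2.1.2
          refine ⟨⟨hz, ?_⟩, hb⟩
          rw [bor_nonreg hb, f00]
          exact Zsq _ p.1.2
      · intro h
        have hb : γ ∈ Br ρ := by
          rcases h with h | h
          · exact h.2
          · exact ZB h
        have hs : (ρ γ 0 0) ^ 2 = 1 := by
          rcases h with h | h
          · exact (bor_nonreg hb).1 h.1.2
          · exact Zsq _ h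
        rcases sq_eq_one' hs with h | h
        · exact ⟨(1, ⟨⟨γ, hb⟩, (hker _).2 h⟩), by simp [f]⟩
        · have hιZ : ι ∈ Zr ρ := by
            show ρ ι ∈ Zg F
            rw [hι]; exact ⟨rfl, rfl, rfl⟩
          refine ⟨(⟨ι, hιZ⟩, ⟨⟨ι⁻¹ * γ, (Br ρ).mul_mem ((Br ρ).inv_mem ιB) hb⟩, (hker _).2 ?_⟩), ?_⟩
          · simp only [map_mul, map_inv, hι, mul_ap, inv00, inv01, mk11, mk01, h]
            ring
          · simp [f]
    have h1 : (Set.range f).ncard = Nat.card (Zr ρ) * Nat.card (chir ρ).ker := by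
      rw [← Nat.card_coe_set_eq, Nat.card_range_of_injective finj, Nat.card_prod]
    rw [← h1, hr, Set.ncard_union_eq]
    · rfl
    · rw [Set.disjoint_left]
      rintro a ⟨⟨h, _⟩, _⟩ h'
      exact h h'
  · have := Subgroup.card_dvd_of_injective β βinj
    exact this
  · have : Nat.card (chir ρ).range ∣ Nat.card Fˣ := Subgroup.card_subgroup_dvd_card _
    rwa [Nat.card_units] at this
  · rw [card_hom φ, hφ, mul_comm]
  · -- W
    let W : Set Fˣ := {w | ∃ b : (chir ρ).ker, ρ b.1.1 0 1 = (w : F)}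
    have hW : W.ncard = Nat.card (chir ρ).ker - 1 := by
      have e : (Units.val '' W) = Set.range (fun b => (β b).toAdd) \ {0} := by
        ext a
        constructor
        · rintro ⟨w, ⟨b, hb⟩, rfl⟩
          exact ⟨⟨b, hb⟩, by simp⟩
        · rintro ⟨⟨b, hb⟩, ha⟩
          refine ⟨Units.mk0 a (by simpa using ha), ⟨b, hb⟩, rfl⟩
      have h0 : (0 : F) ∈ Set.range (fun b => (β b).toAdd) := ⟨1, by simp [βv]⟩
      rw [← Set.ncard_image_of_injective W Units.val_injective, e,
        Set.ncard_sdiff_singleton_of_mem h0, ← Nat.card_coe_set_eq,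
        Nat.card_range_of_injective]
      exact βinj
    have hinv : ∀ t ∈ φ.range, ∀ w ∈ W, w * t ∈ W := by
      rintro t ⟨⟨_, ⟨c, rfl⟩⟩, rfl⟩ w ⟨b, hb⟩
      refine ⟨⟨c * b.1 * c⁻¹, ?_⟩, ?_⟩
      · rw [MonoidHom.mem_ker, map_mul, map_mul, (MonoidHom.mem_ker).1 b.2]; simp
      · have h1 := (hker b.1).1 b.2
        have h2 := hker11 b.1 b.2
        have h3 := hB b.1
        have h4 := bor_det (hB c)
        have h5 := hB c
        simp only [Subgroup.coe_mul, map_mul, map_inv, Subgroup.coe_inv, mul_ap, inv01, inv11,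
          h1, h2, h3, hb]
        show _ = (w : F) * (ρ c.1 0 0) ^ 2
        ring
    rw [← hW]
    have e : W = QuotientGroup.mk ⁻¹' ((QuotientGroup.mk : Fˣ → Fˣ ⧸ φ.range) '' W) := by
      ext w
      constructor
      · intro h; exact ⟨w, h, rfl⟩
      · rintro ⟨w', h, hh⟩
        have := hinv _ (QuotientGroup.eq.1 hh) w' h
        simpa using this
    rw [e, ← Nat.card_coe_set_eq, Nat.card_congr (QuotientGroup.preimageMkEquivSubgroupProdSet _ _),
      Nat.card_prod]
    exact Dvd.intro _ rfl
  · intro hQ b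
    have hs : Function.Surjective β := by
      have : Function.Bijective β := by
        rw [Nat.bijective_iff_injective_and_card]
        exact ⟨βinj, hQ⟩
      exact this.2
    obtain ⟨g, hg⟩ := hs (Multiplicative.ofAdd b)
    refine ⟨g.1.1, ?_⟩
    apply sl_ext
    · exact (hker _).1 g.2
    · exact hg
    · exact hB _
    · exact hker11 _ g.2
  · intro h hb hsq
    have hz : ρ h ∉ Zg F := fun hz => hsq (Zsq _ hz)
    have hCB : ∀ g ∈ Subgroup.centralizer ({h} : Set Γ), g ∈ Br ρ := by
      intro g hg
      exact tri_of_comm hb hz ((comm_rho hρ).2 (mem_cen.1 hg))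
    let f : Subgroup.centralizer ({h} : Set Γ) → (chir ρ).range :=
      fun g => ⟨chir ρ ⟨g.1, hCB _ g.2⟩, ⟨_, rfl⟩⟩
    apply Nat.card_le_card_of_injective f
    intro a b hab
    have h1 : chir ρ ⟨a.1, hCB _ a.2⟩ = chir ρ ⟨b.1, hCB _ b.2⟩ := congrArg Subtype.val hab
    have h2 : ρ a.1 0 0 = ρ b.1 0 0 := congrArg Units.val h1
    have ca := (comm_iff _ _).1 ((comm_rho hρ).2 (mem_cen.1 a.2))
    have cb := (comm_iff _ _).1 ((comm_rho hρ).2 (mem_cen.1 b.2))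
    have ha : ρ a.1 1 0 = 0 := hCB _ a.2
    have hb' : ρ b.1 1 0 = 0 := hCB _ b.2
    have da := bor_det ha
    have db := bor_det hb'
    have dh := bor_det hb
    have h11 : ρ a.1 1 1 = ρ b.1 1 1 := by
      have h0 : ρ a.1 0 0 ≠ 0 := left_ne_zero_of_mul_eq_one da
      apply mul_left_cancel₀ h0
      rw [da, h2, db]
    have hne : ρ h 1 1 - ρ h 0 0 ≠ 0 := by
      intro hh
      apply hsq
      linear_combination dh - ρ h 0 0 * hh
    apply Subtype.ext
    apply hρ
    apply sl_ext h2 _ (by rw [ha, hb']) h11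
    apply mul_right_cancel₀ hne
    rw [ca.2.1, cb.2.1, h2, h11]
  · intro hk
    obtain ⟨a, ha⟩ := IsCyclic.exists_generator (α := (chir ρ).range)
    obtain ⟨c, hc⟩ := a.2
    have hord : orderOf a = Nat.card (chir ρ).range := orderOf_eq_card_of_forall_mem_zpowers ha
    refine ⟨c.1, hB c, ?_, ?_⟩
    · intro hsq
      apply hk
      have hall : ∀ b, b ∈ φ.ker := by
        have haK : a ∈ φ.ker := by
          rw [MonoidHom.mem_ker, Units.ext_iff]
          show ((a.1 : Fˣ) : F) ^ 2 = 1
          rw [← hc]; exact hsq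
        intro b
        have : Subgroup.zpowers a ≤ φ.ker := by
          rw [Subgroup.zpowers_le]; exact haK
        exact this (ha b)
      have : φ.ker = ⊤ := by rw [eq_top_iff]; intro b _; exact hall b
      rw [← hφ, this, Subgroup.card_top]
    · rw [← hord, ← Subgroup.orderOf_coe, ← hc]
      have h1 : orderOf (chir ρ c) ∣ orderOf c := orderOf_map_dvd _ _
      have h2 : orderOf c = orderOf c.1 := (Subgroup.orderOf_coe c).symm
      have h3 : orderOf c.1 ∣ cen c.1 := by
        have : c.1 ∈ Subgroup.centralizer ({c.1} : Set Γ) := mem_cen.2 (Commute.refl _)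
        exact Subgroup.orderOf_dvd_natCard _ this
      rw [h2] at h1
      exact Nat.le_of_dvd Nat.card_pos (h1.trans h3)

end rep
end IG

set_option linter.unusedSectionVars false
set_option linter.unusedSimpArgs false
set_option linter.unusedVariables false
namespace IG
open Matrix

section abs2
variable {Γ : Type*} [Group Γ] [Finite Γ] {Z : Subgroup Γ}

lemma cen_conj (f x : Γ) : cen (f * x * f⁻¹) = cen x := by
  have e : (Subgroup.centralizer ({f * x * f⁻¹} : Set Γ) : Set Γ)
      = (fun d => f * d * f⁻¹) '' (Subgroup.centralizer ({x} : Set Γ) : Set Γ) := by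
    ext d
    simp only [SetLike.mem_coe, mem_cen, Set.mem_image]
    constructor
    · intro h
      refine ⟨f⁻¹ * d * f, ?_, by group⟩
      rw [← conj_comm (h := f)]
      have : f * (f⁻¹ * d * f) * f⁻¹ = d := by group
      rwa [this]
    · rintro ⟨c, hc, rfl⟩
      exact conj_comm.2 hc
  have h2 : ∀ x : Γ, cen x = (Subgroup.centralizer ({x} : Set Γ) : Set Γ).ncard := fun _ => rfl
  rw [h2, h2, e]
  apply Set.ncard_image_of_injective
  intro a b hab
  simpa using hab

lemma cen_of_A (hZ : CT Z) {s x : Γ} (hx : x ∉ Z) (hs : s ∈ A Z x) : cen s = cen x := by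
  obtain ⟨h1, f, hf⟩ := hs
  rw [← cen_conj f x]
  have : Subgroup.centralizer ({s} : Set Γ) = Subgroup.centralizer ({f * x * f⁻¹} : Set Γ) := by
    ext d
    rw [mem_cen, mem_cen]
    constructor
    · intro h
      exact hZ.ct s h1 _ _ h hf.symm
    · intro h
      exact hZ.ct _ ((conj_notin hZ).2 hx) _ _ h hf
  unfold cen
  rw [this]

lemma A_comm (hZ : CT Z) {s s' x : Γ} (hx : x ∉ Z) (hs : s ∈ A Z x) (hs' : s' ∈ A Z x) :
    ∃ f, Commute s' (f * s * f⁻¹) := by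
  obtain ⟨h1, f, hf⟩ := hs
  obtain ⟨h1', f', hf'⟩ := hs'
  refine ⟨f' * f⁻¹, ?_⟩
  have : Commute ((f' * f⁻¹) * s * (f' * f⁻¹)⁻¹) (f' * x * f'⁻¹) := by
    have := (conj_comm (h := f' * f⁻¹)).2 hf
    convert this using 1
    group
  exact hZ.ct _ ((conj_notin hZ).2 hx) _ _ hf' this

lemma inv_of_A (hZ : CT Z) {s x : Γ} (hx : Good Z x) (hgs : Good Z s) (hs : s ∈ A Z x)
    (hk : ∃ k, k * x * k⁻¹ = x⁻¹) : ∃ w, w * s * w⁻¹ = s⁻¹ := by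
  obtain ⟨h1, f, hf⟩ := hs
  obtain ⟨k, hk⟩ := hk
  have e : (f * k * f⁻¹) * (f * x * f⁻¹) * (f * k * f⁻¹)⁻¹ = (f * x * f⁻¹)⁻¹ := by
    calc _ = f * (k * x * k⁻¹) * f⁻¹ := by group
      _ = _ := by rw [hk]; group
  refine ⟨f * k * f⁻¹, ?_⟩
  have c := (conj_comm (h := f * k * f⁻¹)).2 hf
  rw [e] at c
  have c1 : Commute (f * k * f⁻¹ * s * (f * k * f⁻¹)⁻¹) (f * x * f⁻¹) := by
    have := c.inv_right
    rwa [inv_inv] at this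
  have c2 := hZ.ct _ ((conj_notin hZ (h := f)).2 hx.nz) _ _ c1 hf
  rcases hgs.two _ c2 with h | h
  · exfalso
    have c3 : Commute (f * k * f⁻¹) s := by
      show _ = _
      nth_rewrite 2 [← h]
      group
    have c4 := hZ.ct s h1 _ _ c3 hf.symm
    apply hx.ne
    have : (f * k * f⁻¹) * (f * x * f⁻¹) * (f * k * f⁻¹)⁻¹ = f * x * f⁻¹ := by
      rw [c4.eq]; group
    rw [e] at this
    have h5 : f * x⁻¹ * f⁻¹ = f * x * f⁻¹ := by rw [← this]; group
    simpa using h5.symm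
  · exact h
end abs2

set_option maxHeartbeats 800000 in
lemma numeric {n z Q t1 t2 s g N Ax Ay U c : ℕ} (hz : 0 < z) (h1 : n * t1 = 2 * Ax * t1 + n * z)
    (h2 : n * t2 = 2 * Ay * t2 + n * z) (h3 : n = z + Ax + Ay + U) (h4 : n * c = U * (Q * t1))
    (h5 : c + z = z * Q) (h6 : Q * t1 * N = n) (hN : 3 ≤ N) (hs : t1 = s * z) (hg : t2 = g * z)
    (hd : s ∣ Q - 1) (hs20 : 20 ≤ s) (hQ : 0 < Q) :
    (s = Q - 1 ∧ g = Q + 1) ∨ (2 * s = Q - 1 ∧ 2 * g = Q + 1) := by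
  have hn : 0 < n := by omega
  have ht2 : 0 < t2 := by
    rcases Nat.eq_zero_or_pos t2 with h | h
    · rw [h] at h2
      have := Nat.mul_pos hn hz
      omega
    · exact h
  have hgp : 0 < g := by
    rcases Nat.eq_zero_or_pos g with h | h
    · rw [h] at hg; omega
    · exact h
  -- integers
  have key : (N : ℤ) * (Q * s - (Q - 2) * g) = 2 * g := by
    zify at h1 h2 h3 h4 h5 h6 hs hg
    have hc : (c : ℤ) = z * Q - z := by linarith
    rw [hc] at h4
    have e1 : (z : ℤ) * (2 * Q * t1 * t2 + Q * t2 * n - Q * t1 * n - 2 * t2 * n) = 0 := by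
      linear_combination (-2 * Q * t1 * t2 : ℤ) * h3 + Q * t2 * h1 + Q * t1 * h2 + (2 * t2 : ℤ) * h4
    have hz' : (z : ℤ) ≠ 0 := by exact_mod_cast hz.ne'
    have e2 := (mul_eq_zero.1 e1).resolve_left hz'
    have e3 : ((Q : ℤ) * s * z * z) * (2 * g + Q * g * N - Q * s * N - 2 * g * N) = 0 := by
      rw [← h6, hs, hg] at e2
      linear_combination e2
    have h0 : ((Q : ℤ) * s * z * z) ≠ 0 := by
      have : 0 < Q * s * z * z := by positivity
      exact_mod_cast this.ne'
    have e4 := (mul_eq_zero.1 e3).resolve_left h0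
    linear_combination -e4
  set D : ℤ := Q * s - (Q - 2) * g with hD
  have hN' : (3 : ℤ) ≤ N := by exact_mod_cast hN
  have hg' : (0 : ℤ) < g := by exact_mod_cast hgp
  have hDpos : 0 < D := by
    by_contra h
    push Not at h
    nlinarith
  have hDlt : 3 * D ≤ 2 * g := by nlinarith
  have hsg : (s : ℤ) < g := by
    by_contra h
    push Not at h
    have : (Q : ℤ) * g ≤ Q * s := by gcongr
    nlinarith
  obtain ⟨d, hd⟩ := hd
  have hs' : (20 : ℤ) ≤ s := by exact_mod_cast hs20
  have hQ1 : (Q : ℤ) = s * d + 1 := by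
    have : Q = s * d + 1 := by omega
    exact_mod_cast this
  have hQpos : (0 : ℤ) < Q := by exact_mod_cast hQ
  rcases Nat.lt_or_ge d 3 with h | h
  · interval_cases d
    · exfalso
      simp at hQ1
      rw [hQ1] at hD
      push_cast at hD
      nlinarith
    · left
      have hQ2 : (Q : ℤ) = s + 1 := by rw [hQ1]; push_cast; ring
      have g1 : (g : ℤ) ≤ s + 2 := by
        by_contra hh
        push Not at hh
        have : (s : ℤ) + 3 ≤ g := by linarith
        rw [hQ2] at hD
        have h7 : ((s : ℤ) - 1) * (s + 3) ≤ (s - 1) * g :=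
          mul_le_mul_of_nonneg_left this (by linarith)
        have h8 : D = s * s + s - (s - 1) * g := by rw [hD]; ring
        have h9 : ((s : ℤ) - 1) * (s + 3) = s * s + 2 * s - 3 := by ring
        linarith
      have g2 : (g : ℤ) ≠ s + 1 := by
        intro hh
        have : D = g := by rw [hD, hQ2, hh]; ring
        rw [this] at key
        have : (N : ℤ) = 2 := by
          apply mul_right_cancel₀ hg'.ne'
          linarith
        linarith
      constructor
      · omega
      · omega
    · right
      have hQ2 : (Q : ℤ) = 2 * s + 1 := by rw [hQ1]; push_cast; ring
      have g1 : (g : ℤ) ≤ s + 1 := by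
        by_contra hh
        push Not at hh
        have : (s : ℤ) + 2 ≤ g := by linarith
        rw [hQ2] at hD
        have h7 : (2 * (s : ℤ) - 1) * (s + 2) ≤ (2 * s - 1) * g :=
          mul_le_mul_of_nonneg_left this (by linarith)
        have h8 : D = 2 * (s * s) + s - (2 * s - 1) * g := by rw [hD]; ring
        have h9 : (2 * (s : ℤ) - 1) * (s + 2) = 2 * (s * s) + 3 * s - 2 := by ring
        linarith
      constructor
      · omega
      · omega
  · exfalso
    clear key h1 h2 h3 h4 h5 h6 hN hN' hs hg ht2 hn
    have h3 : (3 : ℤ) ≤ d := by exact_mod_cast h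
    have h6 : (s : ℤ) * 3 ≤ s * d := mul_le_mul_of_nonneg_left h3 (by linarith)
    have h4 : 3 * (s : ℤ) + 1 ≤ Q := by rw [hQ1]; linarith
    have h5 : ((Q : ℤ) - 2) * (s + 1) ≤ (Q - 2) * g := by
      apply mul_le_mul_of_nonneg_left
      · linarith
      · linarith
    have h9 : ((Q : ℤ) - 2) * (s + 1) = Q * s - 2 * s + Q - 2 := by ring
    linarith

lemma qpow {p m e Q q : ℕ} (hp : p.Prime) (hQ : Q = p ^ m) (hq : q = p ^ e) (hQ2 : 2 ≤ Q)
    (hme : m ≤ e) (hd : Q - 1 ∣ q - 1) : Q = q ∨ Q ^ 2 ≤ q := by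
  by_cases h2 : 2 * m ≤ e
  · right
    rw [hQ, hq, ← pow_mul, mul_comm]
    exact Nat.pow_le_pow_right hp.pos h2
  · left
    push Not at h2
    obtain ⟨r, rfl⟩ := Nat.exists_eq_add_of_le hme
    have hr : r < m := by omega
    have h1 : p ^ r < p ^ m := Nat.pow_lt_pow_right hp.one_lt hr
    have hpos : 0 < p ^ r := Nat.pow_pos hp.pos
    have e1 : q - 1 = (Q - 1) * p ^ r + (p ^ r - 1) := by
      rw [hq, pow_add, ← hQ]
      obtain ⟨Q', rfl⟩ : ∃ Q', Q = Q' + 1 := ⟨Q - 1, by omega⟩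
      have : (Q' + 1) * p ^ r = Q' * p ^ r + p ^ r := by ring
      rw [this]
      simp
      omega
    rw [e1] at hd
    have hd2 : Q - 1 ∣ p ^ r - 1 := (Nat.dvd_add_right (Dvd.intro _ rfl)).1 hd
    rcases Nat.eq_zero_or_pos (p ^ r - 1) with h | h
    · have : p ^ r = 1 := by omega
      rw [hq, pow_add, this, hQ, mul_one]
    · have := Nat.le_of_dvd h hd2
      omega

section rep2
variable {F : Type*} [Field F] [Finite F]
variable {Γ : Type*} [Group Γ] [Finite Γ]

local notation "SL" => Matrix.SpecialLinearGroup (Fin 2) F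

def rc (ρ : Γ →* SL) (g : SL) : Γ →* SL := (MulAut.conj g⁻¹).toMonoidHom.comp ρ

lemma rc_ap (ρ : Γ →* SL) (g : SL) (γ : Γ) : rc ρ g γ = g⁻¹ * ρ γ * g := by
  simp [rc]

lemma rc_inj {ρ : Γ →* SL} (hρ : Function.Injective ρ) (g : SL) : Function.Injective (rc ρ g) := by
  intro a b h
  rw [rc_ap, rc_ap] at h
  exact hρ (by simpa using h)

lemma Zg_conj (g M : SL) : g⁻¹ * M * g ∈ Zg F ↔ M ∈ Zg F := by
  have key : ∀ g M : SL, M ∈ Zg F → g⁻¹ * M * g ∈ Zg F := by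
    intro g M h
    rw [(Zg_central h g⁻¹).symm.eq]
    simpa using h
  refine ⟨fun h => ?_, key g M⟩
  have := key g⁻¹ _ h
  convert this using 1
  group

lemma rc_Z (ρ : Γ →* SL) (g : SL) : Zr (rc ρ g) = Zr ρ := by
  ext γ
  rw [Subgroup.mem_comap, Subgroup.mem_comap, rc_ap, Zg_conj]

lemma rc_U (ρ : Γ →* SL) (g : SL) : Ur (rc ρ g) = Ur ρ := by
  ext γ
  simp only [Ur, Set.mem_ofPred_eq, rc_ap, Zg_conj, tr_conj']

lemma rc_m {ρ : Γ →* SL} (hm : ∃ ι, ρ ι = mk (-1) 0 0 (-1) (by ring)) (g : SL) :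
    ∃ ι, rc ρ g ι = mk (-1) 0 0 (-1) (by ring) := by
  obtain ⟨ι, hι⟩ := hm
  refine ⟨ι, ?_⟩
  have hz : ρ ι ∈ Zg F := by rw [hι]; exact ⟨rfl, rfl, rfl⟩
  rw [rc_ap, (Zg_central hz g⁻¹).symm.eq, hι]
  simp

lemma Ur_conj (ρ : Γ →* SL) : ∀ u ∈ Ur ρ, ∀ h : Γ, h * u * h⁻¹ ∈ Ur ρ := by
  rintro u ⟨h1, h2⟩ h
  refine ⟨?_, ?_⟩
  · have := Zg_conj (ρ h)⁻¹ (ρ u)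
    simp only [inv_inv] at this
    rw [map_mul, map_mul, map_inv, this]
    exact h1
  · rw [map_mul, map_mul, map_inv, tr_conj]
    exact h2

lemma Ur_uniq (ρ : Γ →* SL) : ∀ u ∈ Ur ρ, u ∈ Br ρ → ∀ h : Γ, h⁻¹ * u * h ∈ Br ρ → h ∈ Br ρ := by
  intro u hu hb h hh
  have h2 : (ρ (h⁻¹ * u * h)) 1 0 = 0 := hh
  rw [map_mul, map_mul, map_inv] at h2
  exact unip_uniq hu.1 hu.2 hb h2

lemma lemK (ρ : Γ →* SL) (hρ : Function.Injective ρ)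
    (hm : ∃ ι, ρ ι = mk (-1) 0 0 (-1) (by ring)) {u : Γ} (hu : u ∈ Ur ρ) (hb : u ∈ Br ρ)
    (hU : 2 * (Ur ρ).ncard < Nat.card Γ) : ∃ h, ρ h 1 0 = 0 ∧ (ρ h 0 0) ^ 2 ≠ 1 := by
  obtain ⟨Q, k, s, h1, h2, -, -, -, -, -, -, h9⟩ := borel ρ hρ hm
  by_cases hk : k = Nat.card (Zr ρ)
  · exfalso
    let U' : Set Γ := {u | u ∈ Ur ρ ∧ ∃ h : Γ, h⁻¹ * u * h ∈ Br ρ}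
    have e : U' ∩ (Br ρ : Set Γ) = Ur ρ ∩ (Br ρ : Set Γ) := by
      ext v
      constructor
      · rintro ⟨⟨h, _⟩, h'⟩; exact ⟨h, h'⟩
      · rintro ⟨h, h'⟩
        exact ⟨⟨h, 1, by simpa using h'⟩, h'⟩
    have hc := cardU U' (Br ρ) (by
      rintro v ⟨hv, f, hf⟩ h
      refine ⟨Ur_conj ρ v hv h, h * f, ?_⟩
      have : (h * f)⁻¹ * (h * v * h⁻¹) * (h * f) = f⁻¹ * v * f := by group
      rw [this]; exact hf) (fun v hv => Ur_uniq ρ v hv.1) (fun v hv => hv.2)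
    rw [e, h1, hk] at hc
    have hle : U'.ncard ≤ (Ur ρ).ncard := Set.ncard_le_ncard (fun v hv => hv.1)
    have hpos : 0 < (Ur ρ ∩ (Br ρ : Set Γ)).ncard := (Set.ncard_pos).2 ⟨u, hu, hb⟩
    have hz : 0 < Nat.card (Zr ρ) := Nat.card_pos
    set c := (Ur ρ ∩ (Br ρ : Set Γ)).ncard
    set z := Nat.card (Zr ρ)
    set n := Nat.card Γ
    have hQ : 2 ≤ Q := by
      by_contra hh
      have : Q ≤ 1 := by omega
      have : z * Q ≤ z * 1 := Nat.mul_le_mul_left _ this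
      omega
    have h2c : z * Q ≤ 2 * c := by nlinarith
    have h3 : n * (z * Q) ≤ 2 * U'.ncard * (z * Q) := by
      calc n * (z * Q) ≤ n * (2 * c) := Nat.mul_le_mul_left _ h2c
        _ = 2 * (n * c) := by ring
        _ = _ := by rw [hc]; ring
    have := Nat.le_of_mul_le_mul_right h3 (by positivity)
    omega
  · obtain ⟨h, a, b, _⟩ := h9 hk
    exact ⟨h, a, b⟩

structure Hyp (ρ : Γ →* SL) (x y : Γ) : Prop where
  inj : Function.Injective ρ
  hm : ∃ ι, ρ ι = mk (-1) 0 0 (-1) (by ring)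
  xs : Spl (ρ x)
  xr : tr (ρ x) ^ 2 ≠ 4
  yn : ¬ Spl (ρ y)
  cx : 40 ≤ cen x
  cy : 40 ≤ cen y

lemma Hyp.rc {ρ : Γ →* SL} {x y : Γ} (h : Hyp ρ x y) (g : SL) : Hyp (rc ρ g) x y where
  inj := rc_inj h.inj g
  hm := rc_m h.hm g
  xs := by
    have := h.xs
    rw [rc_ap]; simpa [Spl, tr_conj'] using this
  xr := by rw [rc_ap, tr_conj']; exact h.xr
  yn := by
    have := h.yn
    rw [rc_ap]; simpa [Spl, tr_conj'] using this
  cx := h.cx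
  cy := h.cy

lemma Hyp.yr {ρ : Γ →* SL} {x y : Γ} (h : Hyp ρ x y) : tr (ρ y) ^ 2 ≠ 4 :=
  fun hh => h.yn (spl_of_nonreg hh)

open Classical in
lemma cardZ (ρ : Γ →* SL) (hρ : Function.Injective ρ)
    (hm : ∃ ι, ρ ι = mk (-1) 0 0 (-1) (by ring)) :
    Nat.card (Zr ρ) = if (2 : F) = 0 then 1 else 2 := by
  obtain ⟨ι, hι⟩ := hm
  have e : (Zr ρ : Set Γ) = {1, ι} := by
    ext γ
    constructor
    · intro hh
      obtain ⟨h1, h2, h3⟩ : ρ γ ∈ Zg F := hh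
      have := bor_det h2
      rw [← h3] at this
      rcases sq_eq_one' (show (ρ γ 0 0) ^ 2 = 1 by linear_combination this) with h | h
      · left
        apply hρ
        rw [map_one]
        apply sl_ext <;> simp [h1, h2, ← h3, h]
      · right
        apply hρ
        rw [hι]
        apply sl_ext <;> simp [h1, h2, ← h3, h]
    · rintro (h | h)
      · rw [h]; exact (Zr ρ).one_mem
      · rw [h]
        show ρ ι ∈ Zg F
        rw [hι]; exact ⟨rfl, rfl, rfl⟩
  have h2 : Nat.card (Zr ρ) = (Zr ρ : Set Γ).ncard := rfl
  rw [h2, e]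
  split_ifs with h
  · have : ι = 1 := by
      apply hρ
      rw [hι, map_one]
      apply sl_ext <;> simp <;> linear_combination -h
    rw [this]; simp
  · rw [Set.ncard_pair]
    intro hh
    rw [← hh, map_one] at hι
    apply h
    have := congrArg (fun M : SL => M 0 0) hι
    simp at this
    linear_combination this

lemma Hyp.nc {ρ : Γ →* SL} {x y : Γ} (h : Hyp ρ x y) (f : Γ) : ¬ Commute y (f * x * f⁻¹) := by
  intro hh
  have h1 := (comm_rho h.inj).2 hh
  apply h.yn
  rw [map_mul, map_mul, map_inv] at h1
  refine spl_of_comm ?_ h1 ?_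
  · apply notZ_of_reg
    rw [tr_conj]; exact h.xr
  · have := h.xs
    simpa [Spl, tr_conj] using this

lemma spl_notA {ρ : Γ →* SL} {x y s : Γ} (h : Hyp ρ x y) (hs : Spl (ρ s)) :
    s ∉ A (Zr ρ) y := by
  rintro ⟨h1, f, hf⟩
  have h2 := (comm_rho h.inj).2 hf
  rw [map_mul, map_mul, map_inv] at h2
  exact h.yn (spl_conj (spl_of_comm h1 h2.symm hs))

lemma prep {ρ : Γ →* SL} {x y : Γ} (h : Hyp ρ x y) :
    (∀ s, tr (ρ s) ^ 2 ≠ 4 → s ∈ A (Zr ρ) x ∨ s ∈ A (Zr ρ) y) ∧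
    (∃ k, k * x * k⁻¹ = x⁻¹) ∧
    Nat.card Γ * cen x = 2 * (A (Zr ρ) x).ncard * cen x + Nat.card Γ * Nat.card (Zr ρ) ∧
    Nat.card Γ * cen y = 2 * (A (Zr ρ) y).ncard * cen y + Nat.card Γ * Nat.card (Zr ρ) ∧
    Nat.card Γ = Nat.card (Zr ρ) + (A (Zr ρ) x).ncard + (A (Zr ρ) y).ncard + (Ur ρ).ncard ∧
    2 * (Ur ρ).ncard < Nat.card Γ ∧ (Ur ρ).Nonempty := by
  have hz2 : Nat.card (Zr ρ) ≤ 2 := by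
    rw [cardZ ρ h.inj h.hm]; split_ifs <;> norm_num
  have hzp : 0 < Nat.card (Zr ρ) := Nat.card_pos
  have hZ := CTr h.inj
  have hx := Goodr h.inj h.xr
  have hy := Goodr h.inj h.yr
  have hcx := h.cx
  have hcy := h.cy
  obtain ⟨m1, m2, m3, m4, m5⟩ := absMain hZ hx hy h.nc (by omega) (by omega)
  have hdis := A_disj hZ h.nc
  have hall : (Set.univ : Set Γ) = (Zr ρ : Set Γ) ∪ A (Zr ρ) x ∪ A (Zr ρ) y ∪ Ur ρ := by
    ext s
    simp only [Set.mem_univ, true_iff, Set.mem_union]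
    by_cases c : tr (ρ s) ^ 2 = 4
    · by_cases c2 : ρ s ∈ Zg F
      · left; left; left; exact c2
      · right; exact ⟨c2, c⟩
    · rcases m1 s (Goodr h.inj c) with a | a
      · left; left; right; exact a
      · left; right; exact a
  have hAU : ∀ x', tr (ρ x') ^ 2 ≠ 4 → Disjoint (A (Zr ρ) x') (Ur ρ) := by
    intro x' hx'
    rw [Set.disjoint_left]
    rintro s ⟨a1, f, a2⟩ ⟨b1, b2⟩
    have c := (comm_rho h.inj).2 a2
    rw [map_mul, map_mul, map_inv] at c
    exact reg_of_comm b1 c.symm (by rw [tr_conj]; exact hx') b2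
  have hZA : ∀ x', Disjoint (Zr ρ : Set Γ) (A (Zr ρ) x') := by
    intro x'
    rw [Set.disjoint_left]
    rintro s a ⟨b, _⟩
    exact b a
  have hZU : Disjoint (Zr ρ : Set Γ) (Ur ρ) := by
    rw [Set.disjoint_left]
    rintro s a ⟨b, _⟩
    exact b a
  have hcard : Nat.card Γ = Nat.card (Zr ρ) + (A (Zr ρ) x).ncard + (A (Zr ρ) y).ncard
      + (Ur ρ).ncard := by
    rw [← Set.ncard_univ, hall, Set.ncard_union_eq, Set.ncard_union_eq, Set.ncard_union_eq]
    · rfl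
    · exact hZA x
    · rw [Set.disjoint_union_left]; exact ⟨hZA y, hdis⟩
    · rw [Set.disjoint_union_left, Set.disjoint_union_left]
      exact ⟨⟨hZU, hAU x h.xr⟩, hAU y h.yr⟩
  refine ⟨fun s hs => m1 s (Goodr h.inj hs), m2, m3, m4, hcard, by omega, ?_⟩
  by_contra hne
  rw [Set.not_nonempty_iff_eq_empty] at hne
  rw [hne, Set.ncard_empty, add_zero] at hcard
  have l1 : cen x ≤ Nat.card Γ := Subgroup.card_le_card_group _
  have l2 : cen y < Nat.card Γ := by
    apply lt_of_le_of_ne (Subgroup.card_le_card_group _)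
    intro e
    have := Subgroup.eq_top_of_card_eq _ e
    have hx' : x ∈ Subgroup.centralizer ({y} : Set Γ) := by rw [this]; trivial
    apply h.nc 1
    simpa using (mem_cen.1 hx').symm
  set n := Nat.card Γ
  set z := Nat.card (Zr ρ)
  set a := (A (Zr ρ) x).ncard
  set b := (A (Zr ρ) y).ncard
  have key : n * (cen x + cen y) * z = 2 * cen x * cen y * z := by
    zify at m3 m4 hcard ⊢
    linear_combination (-(cen y : ℤ)) * m3 - cen x * m4 + 2 * cen x * cen y * hcard
  have key := Nat.eq_of_mul_eq_mul_right hzp key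
  nlinarith

end rep2
end IG

set_option linter.unusedSectionVars false
set_option linter.unusedSimpArgs false
set_option linter.unusedVariables false
namespace IG
open Matrix
section gen
variable {F : Type*} [Field F] [Finite F]
variable {Γ : Type*} [Group Γ] [Finite Γ]

local notation "SL" => Matrix.SpecialLinearGroup (Fin 2) F

lemma tri_fix {H m : SL} (h1 : H 1 0 = 0) (h2 : (H 0 0) ^ 2 ≠ 1) (h3 : (m⁻¹ * H * m) 1 0 = 0)
    (h4 : (m⁻¹ * H * m) 0 0 = H 0 0) : m 1 0 = 0 := by
  have d := bor_det h1
  have e : H * m = m * (m⁻¹ * H * m) := by group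
  have e2 : (H * m) 1 0 = (m * (m⁻¹ * H * m)) 1 0 := by rw [← e]
  rw [mul_ap, mul_ap m, h3, h4, h1] at e2
  have e3 : (H 1 1 - H 0 0) * m 1 0 = 0 := by linear_combination e2
  rcases mul_eq_zero.1 e3 with h | h
  · exfalso
    apply h2
    linear_combination d - H 0 0 * h
  · exact h

lemma conjB {ρ : Γ →* SL} {x y : Γ} (h : Hyp ρ x y) {h0 : Γ} (t0 : ρ h0 1 0 = 0)
    (r0 : (ρ h0 0 0) ^ 2 ≠ 1) {u : Γ} (hu : u ∈ Ur ρ) : ∃ f : Γ, f⁻¹ * u * f ∈ Br ρ := by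
  obtain ⟨m1, m2, -, -, -, m6, -⟩ := prep h
  have hZ := CTr h.inj
  have reg0 : tr (ρ h0) ^ 2 ≠ 4 := fun hh => r0 ((bor_nonreg t0).1 hh)
  have A0 : h0 ∈ A (Zr ρ) x := (m1 h0 reg0).resolve_right (spl_notA h ⟨_, spl_of_tri t0⟩)
  obtain ⟨a', ha'⟩ := spl_of_nonreg hu.2
  obtain ⟨g, hg, -⟩ := exists_tri ha'
  have H' := h.rc g
  have hub : u ∈ Br (rc ρ g) := by
    show (rc ρ g u) 1 0 = 0
    rw [rc_ap]; exact hg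
  obtain ⟨h', t', r'⟩ := lemK (rc ρ g) H'.inj H'.hm (u := u) (by rw [rc_U]; exact hu) hub
    (by rw [rc_U]; exact m6)
  have reg' : tr (rc ρ g h') ^ 2 ≠ 4 := fun hh => r' ((bor_nonreg t').1 hh)
  have reg'' : tr (ρ h') ^ 2 ≠ 4 := by
    rw [rc_ap, tr_conj'] at reg'; exact reg'
  have A' : h' ∈ A (Zr ρ) x := by
    refine (m1 h' reg'').resolve_right ?_
    rw [← rc_Z ρ g]
    exact spl_notA H' ⟨_, spl_of_tri t'⟩
  obtain ⟨f, hf⟩ := A_comm hZ (notZ_of_reg h.xr) A0 A'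
  have key : ∀ f : Γ, (rc ρ g (f * h0 * f⁻¹)) 1 0 = 0 → (rc ρ g (f * h0 * f⁻¹)) 0 0 = ρ h0 0 0 →
      f⁻¹ * u * f ∈ Br ρ := by
    intro f k1 k2
    have e : rc ρ g (f * h0 * f⁻¹) = ((ρ f)⁻¹ * g)⁻¹ * ρ h0 * ((ρ f)⁻¹ * g) := by
      rw [rc_ap, map_mul, map_mul, map_inv]; group
    rw [e] at k1 k2
    have hm := tri_fix t0 r0 k1 k2
    have hm' : ((ρ f)⁻¹ * g) ∈ Bor F := hm
    have hg' : g⁻¹ * ρ u * g ∈ Bor F := hg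
    show ρ (f⁻¹ * u * f) ∈ Bor F
    have := (Bor F).mul_mem ((Bor F).mul_mem hm' hg') ((Bor F).inv_mem hm')
    convert this using 1
    rw [map_mul, map_mul, map_inv]; group
  have c := (comm_rho H'.inj).2 hf
  have k1 := tri_of_comm t' (notZ_of_reg reg') c.symm
  have d0 := bor_det t0
  have d1 := bor_det k1
  have ht : tr (rc ρ g (f * h0 * f⁻¹)) = tr (ρ h0) := by
    rw [rc_ap, tr_conj', map_mul, map_mul, map_inv, tr_conj]
  have q1 := spl_of_tri k1
  rw [ht] at q1
  simp only [tr] at q1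
  have q2 : (rc ρ g (f * h0 * f⁻¹) 0 0 - ρ h0 0 0) * (rc ρ g (f * h0 * f⁻¹) 0 0 - ρ h0 1 1) = 0 := by
    linear_combination q1 + d0
  rcases mul_eq_zero.1 q2 with e | e
  · exact ⟨f, key f k1 (by linear_combination e)⟩
  · obtain ⟨w, hw⟩ := inv_of_A hZ (Goodr h.inj h.xr) (Goodr h.inj reg0) A0 m2
    have e3 : (f * w) * h0 * (f * w)⁻¹ = (f * h0 * f⁻¹)⁻¹ := by
      calc (f * w) * h0 * (f * w)⁻¹ = f * (w * h0 * w⁻¹) * f⁻¹ := by group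
        _ = _ := by rw [hw]; group
    refine ⟨f * w, key (f * w) ?_ ?_⟩
    · rw [e3, map_inv, inv10, k1, neg_zero]
    · rw [e3, map_inv, inv00]
      have e4 : rc ρ g (f * h0 * f⁻¹) 0 0 = ρ h0 1 1 := by linear_combination e
      rw [e4] at d1
      have : ρ h0 1 1 ≠ 0 := right_ne_zero_of_mul_eq_one d0
      apply mul_left_cancel₀ this
      linear_combination d1 - d0

lemma gen1 {ρ : Γ →* SL} {x y : Γ} (h : Hyp ρ x y) {u : Γ} (hu : u ∈ Ur ρ) (hb : u ∈ Br ρ)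
    (p : ℕ) [Fact p.Prime] [CharP F p] : ρ.range = ⊤ ∨
    ∃ m, 1 ≤ m ∧ (p ^ m) ^ 2 ≤ Nat.card F ∧ x ^ (2 * (p ^ m - 1)) = 1 ∧
      y ^ (2 * (p ^ m + 1)) = 1 := by
  classical
  have hp : p.Prime := Fact.out
  obtain ⟨m1, m2, m3, m4, m5, m6, -⟩ := prep h
  have hZ := CTr h.inj
  have hz := cardZ ρ h.inj h.hm
  have hzp : 0 < Nat.card (Zr ρ) := Nat.card_pos
  obtain ⟨Q, k, s, b1, b2, b3, b4, b5, b6, b7, b8, b9⟩ := borel ρ h.inj h.hm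
  obtain ⟨h1, t1, r1⟩ := lemK ρ h.inj h.hm hu hb m6
  have reg : ∀ h0, ρ h0 1 0 = 0 → (ρ h0 0 0) ^ 2 ≠ 1 → tr (ρ h0) ^ 2 ≠ 4 :=
    fun h0 t0 r0 hh => r0 ((bor_nonreg t0).1 hh)
  have hk : k ≠ Nat.card (Zr ρ) := by
    have l1 := two_le_cen hZ (notZ_of_reg (reg h1 t1 r1))
    have l2 := b8 h1 t1 r1
    intro e
    have : 2 * Nat.card (Zr ρ) ≤ Nat.card (Zr ρ) := by
      calc _ ≤ cen h1 := l1
        _ ≤ k := l2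
        _ = _ := e
    omega
  obtain ⟨h0, t0, r0, hk0⟩ := b9 hk
  have A0 : h0 ∈ A (Zr ρ) x := (m1 h0 (reg h0 t0 r0)).resolve_right
    (spl_notA h ⟨_, spl_of_tri t0⟩)
  have hkx : cen x = k := by
    rw [← cen_of_A hZ (notZ_of_reg h.xr) A0]
    exact le_antisymm (b8 h0 t0 r0) hk0
  have hcU := cardU (Ur ρ) (Br ρ) (Ur_conj ρ) (Ur_uniq ρ) (fun v hv => conjB h t0 r0 hv)
  rw [b1] at hcU
  have hyB : y ∉ Br ρ := fun hh => h.yn ⟨_, spl_of_tri hh⟩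
  have hidx := Subgroup.card_mul_index (Br ρ)
  rw [b1] at hidx
  have hN : 3 ≤ (Br ρ).index := by
    have n0 : (Br ρ).index ≠ 0 := Subgroup.index_ne_zero_of_finite
    have n1 : (Br ρ).index ≠ 1 := by
      intro e
      rw [Subgroup.index_eq_one] at e
      apply hyB; rw [e]; trivial
    have n2 : (Br ρ).index ≠ 2 := by
      intro e
      have := Subgroup.normal_of_index_eq_two e
      apply hyB
      refine Ur_uniq ρ u hu hb y ?_
      have := this.conj_mem u hb y⁻¹
      simpa using this
    omega
  have hZy : Nat.card (Zr ρ) ∣ cen y := by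
    apply Subgroup.card_dvd_of_le
    intro z hz
    exact mem_cen.2 (hZ.central z hz y)
  obtain ⟨g, hg⟩ := hZy
  have hQpos : 0 < Q := by
    rcases Nat.eq_zero_or_pos Q with e | e
    · rw [e] at b2; omega
    · exact e
  have hz2 : Nat.card (Zr ρ) ≤ 2 := by rw [hz]; split_ifs <;> norm_num
  have hs20 : 20 ≤ s := by
    have := h.cx
    rw [hkx, b5] at this
    by_contra hh
    push Not at hh
    have : s * Nat.card (Zr ρ) ≤ 19 * 2 := Nat.mul_le_mul (by omega) hz2
    omega
  have num := numeric hzp m3 m4 m5 (by rw [hkx]; exact hcU) b2 (by rw [hkx]; exact hidx) hN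
    (by rw [hkx]; exact b5) (by rw [hg, mul_comm]) b6 hs20 hQpos
  obtain ⟨⟨e, he⟩, -⟩ : (∃ e, Nat.card F = p ^ e) ∧ True := by
    have := Fintype.ofFinite F
    obtain ⟨n, _, hn⟩ := FiniteField.card F p
    exact ⟨⟨n, by rw [Nat.card_eq_fintype_card, hn]⟩, trivial⟩
  obtain ⟨m, hme, hQm⟩ := (Nat.dvd_prime_pow hp).1 (he ▸ b3)
  have hQ21 : 21 ≤ Q := by omega
  have hm1 : 1 ≤ m := by
    rcases Nat.eq_zero_or_pos m with e | e
    · rw [e] at hQm; simp at hQm; omega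
    · exact e
  -- divisibility facts
  have hodd : 2 * s = Q - 1 → Nat.card (Zr ρ) = 2 := by
    intro hs
    rw [hz]
    split_ifs with h2
    · exfalso
      have : p ∣ 2 := by
        rw [← CharP.cast_eq_zero_iff F p]; exact_mod_cast h2
      have : p = 2 := (Nat.prime_dvd_prime_iff_eq hp Nat.prime_two).1 this
      obtain ⟨m', rfl⟩ : ∃ m', m = m' + 1 := ⟨m - 1, by omega⟩
      rw [this, pow_succ] at hQm
      omega
    · rfl
  have d1 : Q - 1 ∣ k := by
    rcases num with ⟨a, _⟩ | ⟨a, _⟩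
    · rw [b5, a]; exact Dvd.intro _ rfl
    · rw [b5, hodd a, mul_comm, a]
  have d2 : k ∣ 2 * (Q - 1) := by
    rcases num with ⟨a, _⟩ | ⟨a, _⟩
    · rw [b5, ← a, mul_comm]
      apply Nat.mul_dvd_mul _ dvd_rfl
      rw [hz]; split_ifs <;> norm_num
    · rw [b5, hodd a, mul_comm, a]; exact Dvd.intro_left _ rfl
  have d3 : cen y ∣ 2 * (Q + 1) := by
    rcases num with ⟨_, a⟩ | ⟨a', a⟩
    · rw [hg, a]
      apply Nat.mul_dvd_mul _ dvd_rfl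
      rw [hz]; split_ifs <;> norm_num
    · rw [hg, hodd a', a]; exact Dvd.intro_left _ rfl
  have ordc : ∀ w : Γ, orderOf w ∣ cen w := by
    intro w
    rw [← Nat.card_zpowers]
    apply Subgroup.card_dvd_of_le
    rw [Subgroup.zpowers_le]
    exact mem_cen.2 (Commute.refl w)
  rcases qpow hp hQm he (by omega) hme (d1.trans b4) with e' | e'
  · left
    refine gen_top ρ.range (fun b => ?_) (Y := ρ y) ⟨y, rfl⟩ hyB
    obtain ⟨γ, hγ⟩ := b7 e' b
    exact ⟨γ, hγ⟩
  · right
    refine ⟨m, hm1, by rw [← hQm]; exact e', ?_, ?_⟩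
    · rw [← hQm]
      apply orderOf_dvd_iff_pow_eq_one.1
      exact (ordc x).trans (hkx ▸ d2)
    · rw [← hQm]
      apply orderOf_dvd_iff_pow_eq_one.1
      exact (ordc y).trans d3

lemma gen {ρ : Γ →* SL} {x y : Γ} (h : Hyp ρ x y)
    (p : ℕ) [Fact p.Prime] [CharP F p] : ρ.range = ⊤ ∨
    ∃ m, 1 ≤ m ∧ (p ^ m) ^ 2 ≤ Nat.card F ∧ x ^ (2 * (p ^ m - 1)) = 1 ∧
      y ^ (2 * (p ^ m + 1)) = 1 := by
  obtain ⟨-, -, -, -, -, -, u, hu⟩ := prep h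
  obtain ⟨a, ha⟩ := spl_of_nonreg hu.2
  obtain ⟨g, hg, -⟩ := exists_tri ha
  rcases gen1 (h.rc g) (u := u) (by rw [rc_U]; exact hu)
    (by show (rc ρ g u) 1 0 = 0; rw [rc_ap]; exact hg) p with e | e
  · left
    rw [eq_top_iff]
    intro M _
    have : g⁻¹ * M * g ∈ (rc ρ g).range := by rw [e]; trivial
    obtain ⟨γ, hγ⟩ := this
    rw [rc_ap] at hγ
    refine ⟨γ, ?_⟩
    simpa using hγ
  · right; exact e
end gen
end IG

set_option linter.unusedSectionVars false
set_option linter.unusedSimpArgs false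
set_option linter.unusedVariables false
namespace IG
open Matrix

def LL : ℕ := Nat.factorial 40
lemma LL_pos : 0 < LL := Nat.factorial_pos 40
lemma LL_dvd {k : ℕ} (h : 0 < k) (h2 : k < 40) : k ∣ LL := Nat.dvd_factorial h h2.le

section six
variable {F : Type*} [Field F] [Finite F]
local notation "SL" => Matrix.SpecialLinearGroup (Fin 2) F

def io (F : Type*) [Field F] : Matrix.SpecialLinearGroup (Fin 2) F := mk (-1) 0 0 (-1) (by ring)

lemma io_comm (M : SL) : io F * M = M * io F :=
  (Zg_central (M := io F) ⟨rfl, rfl, rfl⟩ M).eq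

lemma io_sq : io F * io F = 1 := by
  apply sl_ext <;> simp [io, mul_ap]

lemma io_inv : (io F)⁻¹ = io F := inv_eq_of_mul_eq_one_left io_sq

def Kk (H : Subgroup SL) : Subgroup SL where
  carrier := {M | M ∈ H ∨ io F * M ∈ H}
  mul_mem' := by
    rintro a b (ha | ha) (hb | hb)
    · exact Or.inl (H.mul_mem ha hb)
    · right
      have := H.mul_mem ha hb
      rwa [← mul_assoc, ← io_comm, mul_assoc] at this
    · right
      have := H.mul_mem ha hb
      rwa [mul_assoc] at this
    · left
      have := H.mul_mem ha hb
      have e : io F * a * (io F * b) = (io F * io F) * a * b := by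
        rw [io_comm a]; simp only [mul_assoc]; rw [← mul_assoc (io F) (io F), io_sq, one_mul,
          ← mul_assoc (io F) (io F), io_sq, one_mul]
      rwa [e, io_sq, one_mul] at this
  one_mem' := Or.inl H.one_mem
  inv_mem' := by
    rintro a (ha | ha)
    · exact Or.inl (H.inv_mem ha)
    · right
      have := H.inv_mem ha
      rwa [_root_.mul_inv_rev, io_inv, ← io_comm] at this

lemma top_of_Kk {H : Subgroup SL} (h : Kk H = ⊤) {Y : SL} (hY : Y ∈ H) (hc : Y 1 0 ≠ 0) :
    H = ⊤ := by
  refine gen_top H (fun b => ?_) hY hc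
  have all : ∀ M : SL, M ∈ H ∨ io F * M ∈ H := by
    intro M
    have : M ∈ Kk H := by rw [h]; trivial
    exact this
  by_cases h2 : (2 : F) = 0
  · have : io F = 1 := by
      apply sl_ext <;> simp [io] <;> linear_combination -h2
    rcases all (mk 1 b 0 1 (by ring)) with e | e
    · exact e
    · rwa [this, one_mul] at e
  · have e : mk 1 b 0 1 (by ring) = mk 1 (b / 2) 0 1 (by ring) * mk 1 (b / 2) 0 1 (by ring) := by
      apply sl_ext <;> simp [mul_ap]
      field_simp; ring
    rw [e]
    generalize mk 1 (b / 2) 0 1 (by ring) = N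
    rcases all N with e | e
    · exact H.mul_mem e e
    · have := H.mul_mem e e
      rw [io_comm] at this
      nth_rewrite 2 [← io_comm] at this
      rwa [mul_assoc, ← mul_assoc (io F) (io F), io_sq, one_mul] at this

def Bad (p : ℕ) (x y : SL) : Prop :=
  x ^ LL = 1 ∨ y ^ LL = 1 ∨ ∃ m, 1 ≤ m ∧ (p ^ m) ^ 2 ≤ Nat.card F ∧ x ^ (2 * (p ^ m - 1)) = 1 ∧
      y ^ (2 * (p ^ m + 1)) = 1

lemma cen_big {Γ : Type*} [Group Γ] [Finite Γ] {x : Γ} (h : x ^ LL ≠ 1) : 40 ≤ cen x := by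
  by_contra hh
  push Not at hh
  apply h
  have : orderOf x ∣ cen x := by
    rw [← Nat.card_zpowers]
    apply Subgroup.card_dvd_of_le
    rw [Subgroup.zpowers_le]
    exact mem_cen.2 (Commute.refl x)
  apply orderOf_dvd_iff_pow_eq_one.1
  exact this.trans (LL_dvd Nat.card_pos hh)

lemma sub_top (p : ℕ) [Fact p.Prime] [CharP F p] {x y : SL} (xs : Spl x) (xr : tr x ^ 2 ≠ 4)
    (yn : ¬ Spl y) (hb : ¬ Bad p x y) {H : Subgroup SL} (hx : x ∈ H) (hy : y ∈ H) : H = ⊤ := by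
  unfold Bad at hb
  push Not at hb
  obtain ⟨b1, b2, b3⟩ := hb
  have : Finite SL := inferInstance
  have co : ∀ (w : Kk H) (n : ℕ), w ^ n = 1 ↔ (w : SL) ^ n = 1 := by
    intro w n
    rw [← Subgroup.coe_pow, OneMemClass.coe_eq_one]
  have hyp : Hyp (Kk H).subtype (⟨x, Or.inl hx⟩ : Kk H) (⟨y, Or.inl hy⟩ : Kk H) := by
    refine ⟨Subtype.val_injective, ⟨⟨io F, Or.inr ?_⟩, rfl⟩, xs, xr, yn, ?_, ?_⟩
    · rw [io_sq]; exact H.one_mem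
    · apply cen_big
      intro e
      exact b1 ((co _ _).1 e)
    · apply cen_big
      intro e
      exact b2 ((co _ _).1 e)
  have y10 : y 1 0 ≠ 0 := fun e => yn ⟨_, spl_of_tri e⟩
  rcases gen hyp p with e | ⟨m, e1, e2, e3, e4⟩
  · rw [Subgroup.range_subtype] at e
    exact top_of_Kk e hy y10
  · exact absurd ((co _ _).1 e4) (b3 m e1 e2 ((co _ _).1 e3))

lemma closure_top (p : ℕ) [Fact p.Prime] [CharP F p] {x y : SL} (xs : Spl x) (xr : tr x ^ 2 ≠ 4)
    (yn : ¬ Spl y) (hb : ¬ Bad p x y) (g h : SL) :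
    Subgroup.closure {g * x * g⁻¹, h * y * h⁻¹} = ⊤ := by
  refine sub_top p (x := g * x * g⁻¹) (y := h * y * h⁻¹) ?_ ?_ ?_ ?_
    (Subgroup.subset_closure (by simp)) (Subgroup.subset_closure (by simp))
  · simpa [Spl, tr_conj] using xs
  · rwa [tr_conj]
  · exact fun e => yn (spl_conj e)
  · simpa only [Bad, conj_pow, conj_eq_one_iff] using hb

end six
end IG

set_option linter.unusedSectionVars false
set_option linter.unusedSimpArgs false
set_option linter.unusedVariables false
namespace IG
open Matrix

section poly
open Polynomial
variable {F : Type*} [Field F]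
local notation "SL" => Matrix.SpecialLinearGroup (Fin 2) F

noncomputable def Dp (F : Type*) [Field F] : ℕ → F[X]
  | 0 => C 2
  | 1 => X
  | (n + 2) => X * Dp F (n + 1) - Dp F n

lemma Dp_deg (n : ℕ) : (Dp F (n + 1)).degree = ((n + 1 : ℕ) : WithBot ℕ) ∧
    (Dp F n).degree ≤ (n : WithBot ℕ) := by
  induction n with
  | zero => 
    refine ⟨by simp [Dp], ?_⟩
    simp only [Dp]
    exact degree_C_le
  | succ n ih =>
    refine ⟨?_, ih.1.le⟩
    have e : Dp F (n + 1 + 1) = X * Dp F (n + 1) - Dp F n := rfl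
    have d : (X * Dp F (n + 1)).degree = ((n + 1 + 1 : ℕ) : WithBot ℕ) := by
      rw [degree_mul, degree_X, ih.1]
      norm_cast
      ring
    rw [e, degree_sub_eq_left_of_degree_lt, d]
    rw [d]
    refine lt_of_le_of_lt ih.2 ?_
    exact_mod_cast (by omega : n < n + 1 + 1)

lemma tr_mul_sq (N M : SL) : tr (N * M * M) = tr M * tr (N * M) - tr N := by
  have := det_eq M
  simp only [tr, mul_ap]
  linear_combination (-(N 0 0) - N 1 1) * this

lemma Dp_eval (M : SL) (n : ℕ) : (Dp F n).eval (tr M) = tr (M ^ n) ∧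
    (Dp F (n + 1)).eval (tr M) = tr (M ^ (n + 1)) := by
  induction n with
  | zero =>
    refine ⟨?_, by simp [Dp]⟩
    simp [Dp, tr]; norm_num
  | succ n ih =>
    refine ⟨ih.2, ?_⟩
    have e : Dp F (n + 1 + 1) = X * Dp F (n + 1) - Dp F n := rfl
    rw [e, eval_sub, eval_mul, eval_X, ih.1, ih.2, pow_succ (n := n + 1), pow_succ, tr_mul_sq]

open Classical in
lemma pow_traces (n : ℕ) (hn : 0 < n) : ∃ T : Finset F, T.card ≤ n ∧
    ∀ M : SL, M ^ n = 1 → tr M ∈ T := by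
  obtain ⟨k, rfl⟩ : ∃ k, n = k + 1 := ⟨n - 1, by omega⟩
  have d : (Dp F (k + 1) - C 2).degree = ((k + 1 : ℕ) : WithBot ℕ) := by
    rw [degree_sub_eq_left_of_degree_lt, (Dp_deg k).1]
    rw [(Dp_deg k).1]
    refine lt_of_le_of_lt degree_C_le ?_
    exact_mod_cast (by omega : 0 < k + 1)
  have h0 : Dp F (k + 1) - C 2 ≠ 0 := by
    intro h
    rw [h, Polynomial.degree_zero] at d
    exact absurd d WithBot.bot_ne_coe
  refine ⟨(Dp F (k + 1) - C 2).roots.toFinset, ?_, ?_⟩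
  · refine (Multiset.toFinset_card_le _).trans ?_
    refine (card_roots' _).trans ?_
    exact natDegree_le_of_degree_le d.le
  · intro M hM
    rw [Multiset.mem_toFinset, mem_roots h0, IsRoot, eval_sub, (Dp_eval M k).2, hM]
    simp [tr]; norm_num
end poly

section cnt
variable {F : Type*} [Field F] [Fintype F]
local notation "SL" => Matrix.SpecialLinearGroup (Fin 2) F
local notation "q" => Fintype.card F

open Classical in
noncomputable def rr (t : F) : ℕ := (Finset.univ.filter (fun a : F => a ^ 2 - t * a + 1 = 0)).card

open Classical in
lemma card_bc (t : F) : (Finset.univ.filter (fun v : F × F => v.1 * v.2 = t)).card + 1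
    = q + (if t = 0 then q else 0) := by
  have h1 : (Finset.univ.filter (fun v : F × F => v.1 * v.2 = t)).card
      = ∑ b : F, (Finset.univ.filter (fun c : F => b * c = t)).card := by
    rw [Finset.card_filter, Fintype.sum_prod_type]
    refine Finset.sum_congr rfl fun b _ => ?_
    rw [Finset.card_filter]
  have h2 : ∀ b : F, b ≠ 0 → (Finset.univ.filter (fun c : F => b * c = t)).card = 1 := by
    intro b hb
    rw [Finset.card_eq_one]
    refine ⟨b⁻¹ * t, ?_⟩
    ext c
    simp only [Finset.mem_filter, Finset.mem_univ, true_and, Finset.mem_singleton]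
    constructor
    · rintro rfl; field_simp
    · rintro rfl; field_simp
  rw [h1, ← Finset.add_sum_erase _ _ (Finset.mem_univ (0 : F))]
  rw [Finset.sum_congr rfl (g := fun _ => 1) (fun b hb => h2 b (Finset.ne_of_mem_erase hb))]
  rw [Finset.sum_const, Finset.card_erase_of_mem (Finset.mem_univ _), Finset.card_univ]
  have hq : 0 < q := Fintype.card_pos
  have h3 : (Finset.univ.filter (fun c : F => (0 : F) * c = t)).card = if t = 0 then q else 0 := by
    split_ifs with h
    · simp [h]
    · rw [Finset.card_eq_zero, Finset.filter_eq_empty_iff]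
      intro c _ hc
      exact h (by rw [← hc, zero_mul])
  rw [h3]
  simp only [smul_eq_mul, mul_one]
  omega

open Classical in
lemma fib_card (t : F) : {M : SL | tr M = t}.ncard + q = q * q + q * rr t := by
  have h1 : {M : SL | tr M = t}.ncard
      = ∑ a : F, (Finset.univ.filter (fun v : F × F => v.1 * v.2 = -(a ^ 2 - t * a + 1))).card := by
    have e : {M : SL | tr M = t}.ncard = (Finset.univ.filter
        (fun w : F × (F × F) => w.2.1 * w.2.2 = -(w.1 ^ 2 - t * w.1 + 1))).card := by
      rw [← Set.ncard_coe_finset]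
      refine Set.ncard_congr (fun M _ => (M 0 0, M 0 1, M 1 0)) ?_ ?_ ?_
      · intro M hM
        have hM : tr M = t := hM
        have := det_eq M
        simp only [Finset.coe_filter, Finset.mem_univ, true_and, Set.mem_ofPred_eq]
        simp only [tr] at hM
        rw [← hM]
        linear_combination -this
      · intro M N hM hN e
        have hM : tr M = t := hM
        have hN : tr N = t := hN
        simp only [Prod.mk.injEq] at e
        simp only [tr] at hM hN
        refine sl_ext e.1 e.2.1 e.2.2 ?_
        linear_combination hM - hN - e.1
      · rintro ⟨a, b, c⟩ h
        simp only [Finset.coe_filter, Finset.mem_univ, true_and, Set.mem_ofPred_eq] at h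
        refine ⟨mk a b c (t - a) (by linear_combination -h), ?_, rfl⟩
        show tr _ = t
        simp [tr]
    rw [e, Finset.card_filter, Fintype.sum_prod_type]
    refine Finset.sum_congr rfl fun b _ => ?_
    rw [Finset.card_filter]
  have h2 : ∑ a : F, ((Finset.univ.filter (fun v : F × F => v.1 * v.2 = -(a ^ 2 - t * a + 1))).card + 1)
      = q * q + q * rr t := by
    rw [Finset.sum_congr rfl (fun a _ => card_bc _), Finset.sum_add_distrib, Finset.sum_const,
      ← Finset.sum_filter, Finset.sum_const, Finset.card_univ]
    simp only [neg_eq_zero, smul_eq_mul, rr]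
    ring
  rw [Finset.sum_add_distrib, ← h1] at h2
  simpa using h2

open Classical in
lemma cnt (T : Finset F) : {M : SL | tr M ∈ T}.ncard = ∑ t ∈ T, {M : SL | tr M = t}.ncard := by
  have : Fintype SL := Fintype.ofFinite _
  have e : ∀ P : SL → Prop, {M : SL | P M}.ncard = (Finset.univ.filter P).card := by
    intro P
    rw [← Set.ncard_coe_finset]
    simp
  rw [e, Finset.card_eq_sum_card_fiberwise (f := fun M : SL => tr M) (t := T)]
  · refine Finset.sum_congr rfl fun t ht => ?_
    rw [e]
    congr 1
    ext M
    simp only [Finset.mem_filter, Finset.mem_univ, true_and]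
    constructor
    · exact fun h => h.2
    · exact fun h => ⟨h ▸ ht, h⟩
  · intro M hM
    simpa using hM

open Classical in
lemma sum_rr : (∑ t : F, rr t) + 1 = q := by
  have h1 : ∑ t : F, rr t = ∑ a : F, (Finset.univ.filter (fun t : F => a ^ 2 - t * a + 1 = 0)).card := by
    simp only [rr, Finset.card_filter]
    rw [Finset.sum_comm]
  have h2 : ∀ a : F, (Finset.univ.filter (fun t : F => a ^ 2 - t * a + 1 = 0)).card
      = if a = 0 then 0 else 1 := by
    intro a
    split_ifs with h
    · rw [Finset.card_eq_zero, Finset.filter_eq_empty_iff]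
      intro t _ ht
      rw [h] at ht
      simp at ht
    · rw [Finset.card_eq_one]
      refine ⟨(a ^ 2 + 1) / a, ?_⟩
      ext t
      simp only [Finset.mem_filter, Finset.mem_univ, true_and, Finset.mem_singleton]
      constructor
      · intro e
        field_simp
        linear_combination -e
      · rintro rfl
        field_simp; ring
  have hq : 0 < q := Fintype.card_pos
  rw [h1, Finset.sum_congr rfl (fun a _ => h2 a), ← Finset.add_sum_erase _ _ (Finset.mem_univ (0 : F))]
  rw [Finset.sum_congr rfl (g := fun _ => 1) (fun b hb => if_neg (Finset.ne_of_mem_erase hb))]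
  rw [Finset.sum_const, Finset.card_erase_of_mem (Finset.mem_univ _), Finset.card_univ]
  simp
  omega

/-- values of rr -/
lemma rr_nonreg {t : F} (h : t ^ 2 = 4) : rr t = 1 := by
  classical
  rw [rr, Finset.card_eq_one]
  have : (t - 2) * (t + 2) = 0 := by linear_combination h
  rcases mul_eq_zero.1 this with h | h
  · refine ⟨1, ?_⟩
    ext a
    simp only [Finset.mem_filter, Finset.mem_univ, true_and, Finset.mem_singleton]
    have e : a ^ 2 - t * a + 1 = (a - 1) ^ 2 - (t - 2) * a := by ring
    rw [e, h, zero_mul, sub_zero, sq_eq_zero_iff, sub_eq_zero]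
  · refine ⟨-1, ?_⟩
    ext a
    simp only [Finset.mem_filter, Finset.mem_univ, true_and, Finset.mem_singleton]
    have e : a ^ 2 - t * a + 1 = (a + 1) ^ 2 - (t + 2) * a := by ring
    rw [e, h, zero_mul, sub_zero, sq_eq_zero_iff, add_eq_zero_iff_eq_neg]

lemma rr_spl {t : F} (h : t ^ 2 ≠ 4) {a : F} (ha : a ^ 2 - t * a + 1 = 0) : rr t = 2 := by
  classical
  rw [rr, Finset.card_eq_two]
  refine ⟨a, t - a, ?_, ?_⟩
  · intro e
    apply h
    linear_combination (-4 : F) * ha + (t - 2 * a) * (-e)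
  · ext b
    simp only [Finset.mem_filter, Finset.mem_univ, true_and, Finset.mem_singleton,
      Finset.mem_insert]
    have e : b ^ 2 - t * b + 1 = (b - a) * (b - (t - a)) := by linear_combination ha
    rw [e, mul_eq_zero, sub_eq_zero, sub_eq_zero]

lemma rr_nspl {t : F} (h : ¬ ∃ a : F, a ^ 2 - t * a + 1 = 0) : rr t = 0 := by
  classical
  rw [rr, Finset.card_eq_zero, Finset.filter_eq_empty_iff]
  intro a _ ha
  exact h ⟨a, ha⟩

lemma rr_le (t : F) : rr t ≤ 2 := by
  by_cases h : t ^ 2 = 4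
  · rw [rr_nonreg h]; norm_num
  · by_cases h2 : ∃ a : F, a ^ 2 - t * a + 1 = 0
    · obtain ⟨a, ha⟩ := h2
      rw [rr_spl h ha]
    · rw [rr_nspl h2]; norm_num

lemma pow_card (n : ℕ) (hn : 0 < n) : {M : SL | M ^ n = 1}.ncard ≤ n * (2 * q ^ 2) := by
  obtain ⟨T, hT, h⟩ := pow_traces (F := F) n hn
  have h1 : {M : SL | M ^ n = 1}.ncard ≤ {M : SL | tr M ∈ T}.ncard :=
    Set.ncard_le_ncard (fun M hM => h M hM)
  have h2 : ∀ t ∈ T, {M : SL | tr M = t}.ncard ≤ 2 * q ^ 2 := by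
    intro t _
    have := fib_card t
    have h3 := rr_le t
    have hq : 0 < q := Fintype.card_pos
    have : q * rr t ≤ q * 2 := Nat.mul_le_mul_left _ h3
    nlinarith
  rw [cnt] at h1
  calc _ ≤ _ := h1
    _ ≤ T.card * (2 * q ^ 2) := by
      have := Finset.sum_le_card_nsmul T _ _ h2
      simpa using this
    _ ≤ _ := Nat.mul_le_mul_right _ hT
end cnt
end IG

set_option linter.unusedSectionVars false
set_option linter.unusedSimpArgs false
set_option linter.unusedVariables false
namespace IG
open Matrix

section cnt2
variable {F : Type*} [Field F] [Fintype F]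
local notation "SL" => Matrix.SpecialLinearGroup (Fin 2) F
local notation "q" => Fintype.card F

def SS (F : Type*) [Field F] : Set (Matrix.SpecialLinearGroup (Fin 2) F) :=
  {M | Spl M ∧ tr M ^ 2 ≠ 4}
def NN (F : Type*) [Field F] : Set (Matrix.SpecialLinearGroup (Fin 2) F) := {M | ¬ Spl M}
def RR (F : Type*) [Field F] : Set (Matrix.SpecialLinearGroup (Fin 2) F) := {M | tr M ^ 2 = 4}

open Classical in
lemma counts : ∃ n0 n1 n2 : ℕ, n0 + n1 + n2 = q ∧ 2 * n2 + n1 + 1 = q ∧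
    (SS F).ncard = n2 * (q ^ 2 + q) ∧ (NN F).ncard + n0 * q = n0 * q ^ 2 ∧
    (RR F).ncard = n1 * q ^ 2 ∧ n1 = Nat.card (Zg F) ∧ n1 ≤ 2 ∧
    Nat.card SL + q = q ^ 3 := by
  let T0 : Finset F := Finset.univ.filter fun t => ¬ ∃ a : F, a ^ 2 - t * a + 1 = 0
  let T1 : Finset F := Finset.univ.filter fun t => t ^ 2 = 4
  let T2 : Finset F := Finset.univ.filter fun t => (∃ a : F, a ^ 2 - t * a + 1 = 0) ∧ t ^ 2 ≠ 4
  have hspl : ∀ t : F, t ^ 2 = 4 → ∃ a : F, a ^ 2 - t * a + 1 = 0 := by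
    intro t h
    have : (t - 2) * (t + 2) = 0 := by linear_combination h
    rcases mul_eq_zero.1 this with h | h
    · exact ⟨1, by linear_combination -h⟩
    · exact ⟨-1, by linear_combination h⟩
  have hd1 : Disjoint T0 T1 := by
    rw [Finset.disjoint_left]
    intro t h0 h1
    simp only [T0, T1, Finset.mem_filter, Finset.mem_univ, true_and] at h0 h1
    exact h0 (hspl t h1)
  have hd2 : Disjoint (T0 ∪ T1) T2 := by
    rw [Finset.disjoint_left]
    intro t h0 h1
    simp only [T0, T1, T2, Finset.mem_filter, Finset.mem_univ, true_and, Finset.mem_union] at h0 h1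
    rcases h0 with h0 | h0
    · exact h0 h1.1
    · exact h1.2 h0
  have hun : (T0 ∪ T1) ∪ T2 = Finset.univ := by
    ext t
    simp only [T0, T1, T2, Finset.mem_filter, Finset.mem_univ, true_and, Finset.mem_union, iff_true]
    tauto
  have s0 : ∀ t ∈ T0, rr t = 0 := by
    intro t ht
    simp only [T0, Finset.mem_filter, Finset.mem_univ, true_and] at ht
    exact rr_nspl ht
  have s1 : ∀ t ∈ T1, rr t = 1 := by
    intro t ht
    simp only [T1, Finset.mem_filter, Finset.mem_univ, true_and] at ht
    exact rr_nonreg ht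
  have s2 : ∀ t ∈ T2, rr t = 2 := by
    intro t ht
    simp only [T2, Finset.mem_filter, Finset.mem_univ, true_and] at ht
    obtain ⟨⟨a, ha⟩, h⟩ := ht
    exact rr_spl h ha
  have c1 : T0.card + T1.card + T2.card = q := by
    rw [← Finset.card_union_of_disjoint hd1, ← Finset.card_union_of_disjoint hd2, hun,
      Finset.card_univ]
  have c2 : 2 * T2.card + T1.card + 1 = q := by
    have := sum_rr (F := F)
    rw [← hun, Finset.sum_union hd2, Finset.sum_union hd1, Finset.sum_congr rfl s0,
      Finset.sum_congr rfl s1, Finset.sum_congr rfl s2] at this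
    simp at this
    omega
  have hcnt : ∀ (T : Finset F) (r : ℕ), (∀ t ∈ T, rr t = r) →
      {M : SL | tr M ∈ T}.ncard + T.card * q = T.card * (q * q + q * r) := by
    intro T r h
    rw [cnt]
    have : ∑ t ∈ T, ({M : SL | tr M = t}.ncard + q) = T.card * (q * q + q * r) := by
      rw [Finset.sum_congr rfl (g := fun _ => q * q + q * r)
        (fun t ht => by rw [fib_card, h t ht]), Finset.sum_const, smul_eq_mul]
    rwa [Finset.sum_add_distrib, Finset.sum_const, smul_eq_mul] at this
  have k0 := hcnt T0 0 s0
  have k1 := hcnt T1 1 s1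
  have k2 := hcnt T2 2 s2
  have eN : {M : SL | tr M ∈ T0} = NN F := by
    ext M; simp [T0, NN, Spl]
  have eR : {M : SL | tr M ∈ T1} = RR F := by
    ext M; simp [T1, RR]
  have eS : {M : SL | tr M ∈ T2} = SS F := by
    ext M; simp [T2, SS, Spl]
  rw [eN] at k0
  rw [eR] at k1
  rw [eS] at k2
  have hz : Nat.card (Zg F) = if (2 : F) = 0 then 1 else 2 :=
    cardZ (MonoidHom.id SL) Function.injective_id ⟨mk (-1) 0 0 (-1) (by ring), rfl⟩
  have hT1 : T1 = {2, -2} := by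
    ext t
    simp only [T1, Finset.mem_filter, Finset.mem_univ, true_and, Finset.mem_insert,
      Finset.mem_singleton]
    constructor
    · intro h
      have : (t - 2) * (t + 2) = 0 := by linear_combination h
      rcases mul_eq_zero.1 this with h | h
      · left; linear_combination h
      · right; linear_combination h
    · rintro (h | h) <;> rw [h] <;> norm_num
  have hT1c : T1.card = if (2 : F) = 0 then 1 else 2 := by
    rw [hT1]
    split_ifs with h
    · simp [h]
    · rw [Finset.card_pair]
      intro e
      have : (2 : F) * 2 = 0 := by linear_combination e
      exact h (mul_self_eq_zero.1 this)
  refine ⟨T0.card, T1.card, T2.card, c1, c2, ?_, ?_, ?_, ?_, ?_, ?_⟩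
  · nlinarith
  · rw [k0]; ring
  · nlinarith
  · rw [hT1c, hz]
  · rw [hT1c]; split_ifs <;> norm_num
  · have hh : {M : SL | tr M ∈ (Finset.univ : Finset F)}.ncard = Nat.card SL := by
      rw [← Set.ncard_univ]; congr 1; ext M; simp
    rw [cnt] at hh
    have : ∑ t : F, ({M : SL | tr M = t}.ncard + q) = q * (q * q) + q * ∑ t : F, rr t := by
      rw [Finset.sum_congr rfl (fun t _ => fib_card t), Finset.sum_add_distrib, Finset.sum_const,
        Finset.mul_sum, Finset.card_univ, smul_eq_mul]
    rw [Finset.sum_add_distrib, hh, Finset.sum_const, smul_eq_mul, Finset.card_univ] at this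
    have h3 := sum_rr (F := F)
    have h4 : q * (∑ t : F, rr t) + q = q * q := by
      calc _ = q * ((∑ t : F, rr t) + 1) := by ring
        _ = _ := by rw [h3]
    have h5 : q ^ 3 = q * (q * q) := by ring
    omega

lemma orbit_bound (x : SL) : Nat.card SL ≤ {M : SL | tr M = tr x}.ncard * cen x := by
  have h := dc (Γ := SL) {x} {w | ∃ h0, w = h0 * x * h0⁻¹} (cen x)
    (by rintro d hd h; rw [Set.mem_singleton_iff.1 hd]; exact ⟨h, rfl⟩) (by
      rintro w ⟨h0, rfl⟩
      rw [← cen_coset x h0]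
      congr 1
      ext h
      simp only [Set.mem_singleton_iff, Set.mem_ofPred_eq]
      constructor
      · intro e
        nth_rewrite 1 [← e]
        group
      · intro e
        rw [← e]; group)
  rw [Set.ncard_singleton, mul_one] at h
  rw [h]
  apply Nat.mul_le_mul_right
  refine Set.ncard_le_ncard ?_ (Set.toFinite _)
  rintro w ⟨h0, rfl⟩
  exact tr_conj _ _

lemma arith {n q' z A c k : ℤ} (hz : 0 ≤ z) (hn : 0 ≤ n) (hc : q' ≤ c) (hq : 0 < q') 
    (h1 : n * c ≤ 2 * A * c + n * z)
    (h2 : n = k * q') : k * (q' - z) ≤ 2 * A := by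
  have hc0 : 0 < c := by linarith
  have h3 : n * z * q' ≤ n * z * c := mul_le_mul_of_nonneg_left hc (by positivity)
  have h4 : (n * c) * q' ≤ (2 * A * c + n * z) * q' := mul_le_mul_of_nonneg_right h1 hq.le
  have h5 : (k * (q' - z)) * (c * q') ≤ (2 * A) * (c * q') := by
    have : (k * (q' - z)) * (c * q') = n * c * q' - n * z * c := by rw [h2]; ring
    rw [this]; linarith
  exact le_of_mul_le_mul_right h5 (by positivity)

lemma A_eq_N {y : SL} (hy : ¬ Spl y) : A (Zg F) y = NN F := by
  obtain ⟨n0, n1, n2, h1, h2, h3, h4, h5, h6, h7, h8⟩ := counts (F := F)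
  have inj : Function.Injective (MonoidHom.id SL) := Function.injective_id
  have hyr : tr y ^ 2 ≠ 4 := fun e => hy (spl_of_nonreg e)
  have hA : Nat.card SL * cen y ≤ 2 * (A (Zg F) y).ncard * cen y + Nat.card SL * Nat.card (Zg F) :=
    cardA_le (CTr inj) (Goodr inj hyr)
  have ob := orbit_bound y
  have fb := fib_card (tr y)
  rw [rr_nspl hy] at fb
  have hsub : A (Zg F) y ⊆ NN F := by
    rintro s ⟨a1, f, a2⟩ hs
    exact hy (spl_conj (spl_of_comm a1 a2.symm hs))
  apply Set.eq_of_subset_of_ncard_le hsub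
  rw [← h6] at hA
  have hq : 2 ≤ q := Fintype.one_lt_card
  generalize (A (Zg F) y).ncard = a at *
  generalize (NN F).ncard = nn at *
  generalize {M : SL | tr M = tr y}.ncard = fb' at *
  generalize Nat.card SL = n at *
  generalize cen y = c at *
  generalize q = Q at *
  zify at *
  have e1 : (n : ℤ) = (Q * (Q - 1)) * (Q + 1) := by linear_combination h8
  have e2 : (fb' : ℤ) = Q * (Q - 1) := by linear_combination fb
  have hp : (0 : ℤ) < Q * (Q - 1) := mul_pos (by linarith) (by linarith)
  have hc : (Q : ℤ) + 1 ≤ c := by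
    rw [e1, e2] at ob
    exact le_of_mul_le_mul_left ob hp
  have := arith (by positivity) (by positivity) hc (by positivity) hA e1
  have e3 : 2 * (nn : ℤ) = Q * (Q - 1) * (Q + 1 - n1) := by
    have : 2 * (n0 : ℤ) = Q + 1 - n1 := by linarith
    rw [← this]; linear_combination 2 * h4
  linarith

lemma A_eq_S {y : SL} (hy : Spl y) (hyr : tr y ^ 2 ≠ 4) : A (Zg F) y = SS F := by
  obtain ⟨n0, n1, n2, h1, h2, h3, h4, h5, h6, h7, h8⟩ := counts (F := F)
  have inj : Function.Injective (MonoidHom.id SL) := Function.injective_id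
  have hA : Nat.card SL * cen y ≤ 2 * (A (Zg F) y).ncard * cen y + Nat.card SL * Nat.card (Zg F) :=
    cardA_le (CTr inj) (Goodr inj hyr)
  have ob := orbit_bound y
  have fb := fib_card (tr y)
  obtain ⟨b, hb⟩ := id hy
  rw [rr_spl hyr hb] at fb
  have hsub : A (Zg F) y ⊆ SS F := by
    rintro s ⟨a1, f, a2⟩
    have r : tr (f * y * f⁻¹) ^ 2 ≠ 4 := by rwa [tr_conj]
    have sp : Spl (f * y * f⁻¹) := by simpa [Spl, tr_conj] using hy
    exact ⟨spl_of_comm (notZ_of_reg r) a2 sp, reg_of_comm a1 a2.symm r⟩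
  apply Set.eq_of_subset_of_ncard_le hsub
  rw [← h6] at hA
  have hq : 2 ≤ q := Fintype.one_lt_card
  generalize (A (Zg F) y).ncard = a at *
  generalize (SS F).ncard = nn at *
  generalize {M : SL | tr M = tr y}.ncard = fb' at *
  generalize Nat.card SL = n at *
  generalize cen y = c at *
  generalize q = Q at *
  zify at *
  have e1 : (n : ℤ) = (Q * (Q + 1)) * (Q - 1) := by linear_combination h8
  have e2 : (fb' : ℤ) = Q * (Q + 1) := by linear_combination fb
  have hp : (0 : ℤ) < Q * (Q + 1) := mul_pos (by linarith) (by linarith)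
  have hc : (Q : ℤ) - 1 ≤ c := by
    rw [e1, e2] at ob
    exact le_of_mul_le_mul_left ob hp
  have := arith (by positivity) (by positivity) hc (by linarith) hA e1
  have e3 : 2 * (nn : ℤ) = Q * (Q + 1) * (Q - 1 - n1) := by
    have : 2 * (n2 : ℤ) = Q - 1 - n1 := by linarith
    rw [← this]; linear_combination 2 * h3
  linarith

lemma not_top {x y : SL} (hx : x ∉ Zg F) (h : SL) (hc : Commute x (h * y * h⁻¹)) :
    Subgroup.closure {1 * x * 1⁻¹, h * y * h⁻¹} ≠ ⊤ := by
  intro e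
  have h1 : Subgroup.closure {1 * x * 1⁻¹, h * y * h⁻¹} ≤ Subgroup.centralizer ({x} : Set SL) := by
    rw [Subgroup.closure_le]
    rintro w (rfl | hw)
    · show _ ∈ Subgroup.centralizer ({x} : Set SL)
      rw [mem_cen]; simp
    · rw [Set.mem_singleton_iff.1 hw]
      show _ ∈ Subgroup.centralizer ({x} : Set SL)
      rw [mem_cen]; exact hc.symm
  rw [e] at h1
  have all : ∀ M : SL, Commute M x := fun M => mem_cen.1 (h1 (Subgroup.mem_top M))
  have c := ct_G hx (all (mk 1 1 0 1 (by ring))) (all (mk 1 0 1 1 (by ring)))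
  rw [comm_iff] at c
  simp at c

end cnt2
end IG

set_option linter.unusedSectionVars false
set_option linter.unusedSimpArgs false
set_option linter.unusedVariables false
namespace IG
open Matrix

lemma geo (b t : ℕ) (hb : 2 ≤ b) : ∑ m ∈ Finset.range (t + 1), b ^ m ≤ 2 * b ^ t := by
  induction t with
  | zero => simp
  | succ t ih =>
    rw [Finset.sum_range_succ, pow_succ]
    have : 2 * b ^ t ≤ b ^ t * b := by rw [mul_comm]; exact Nat.mul_le_mul_left _ hb
    omega

section fin
variable {F : Type*} [Field F] [Fintype F]
local notation "SL" => Matrix.SpecialLinearGroup (Fin 2) F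
local notation "q" => Fintype.card F

lemma upper : {v : SL × SL | InvGen v.1 v.2} ⊆
    ((SS F ×ˢ NN F) ∪ (NN F ×ˢ SS F)) ∪ ((RR F ×ˢ Set.univ) ∪ (Set.univ ×ˢ RR F)) := by
  rintro ⟨x, y⟩ h
  have h : InvGen x y := h
  by_cases rx : tr x ^ 2 = 4
  · right; left; exact ⟨rx, trivial⟩
  by_cases ry : tr y ^ 2 = 4
  · right; right; exact ⟨trivial, ry⟩
  left
  by_cases sx : Spl x
  · by_cases sy : Spl y
    · exfalso
      have : x ∈ A (Zg F) y := by rw [A_eq_S sy ry]; exact ⟨sx, rx⟩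
      obtain ⟨h1, f, hf⟩ := this
      exact not_top h1 f hf (h 1 f)
    · left; exact ⟨⟨sx, rx⟩, sy⟩
  · by_cases sy : Spl y
    · right; exact ⟨sx, ⟨sy, ry⟩⟩
    · exfalso
      have : x ∈ A (Zg F) y := by rw [A_eq_N sy]; exact sx
      obtain ⟨h1, f, hf⟩ := this
      exact not_top h1 f hf (h 1 f)

lemma lower (p : ℕ) [Fact p.Prime] [CharP F p] :
    ((SS F ×ˢ NN F) ∪ (NN F ×ˢ SS F)) ⊆ {v : SL × SL | InvGen v.1 v.2} ∪
      ({v : SL × SL | Bad p v.1 v.2} ∪ Prod.swap '' {v : SL × SL | Bad p v.1 v.2}) := by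
  rintro ⟨x, y⟩ (⟨h1, h2⟩ | ⟨h1, h2⟩)
  · by_cases hb : Bad p x y
    · right; left; exact hb
    · left
      intro g h
      exact closure_top p h1.1 h1.2 h2 hb g h
  · by_cases hb : Bad p y x
    · right; right; exact ⟨(y, x), hb, rfl⟩
    · left
      intro g h
      rw [Set.pair_comm]
      exact closure_top p h2.1 h2.2 h1 hb h g

lemma bad_card (p : ℕ) [Fact p.Prime] [CharP F p] :
    {v : SL × SL | Bad p v.1 v.2}.ncard ≤ (4 * LL + 64) * q ^ 5 := by
  have hp : p.Prime := Fact.out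
  let P : ℕ → Set SL := fun n => {M | M ^ n = 1}
  let t := Nat.log (p ^ 2) q
  have hp2 : 1 < p ^ 2 := Nat.one_lt_pow (by norm_num) hp.one_lt
  have hq : 0 < q := Fintype.card_pos
  have hsub : {v : SL × SL | Bad p v.1 v.2} ⊆ ((P LL ×ˢ Set.univ) ∪ (Set.univ ×ˢ P LL)) ∪
      ⋃ m ∈ (Finset.range (t + 1)).filter (fun m => 1 ≤ m),
        P (2 * (p ^ m - 1)) ×ˢ P (2 * (p ^ m + 1)) := by
    rintro ⟨x, y⟩ (h | h | ⟨m, h1, h2, h3, h4⟩)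
    · left; left; exact ⟨h, trivial⟩
    · left; right; exact ⟨trivial, h⟩
    · right
      rw [Set.mem_iUnion₂]
      refine ⟨m, ?_, h3, h4⟩
      rw [Finset.mem_filter, Finset.mem_range]
      refine ⟨?_, h1⟩
      rw [Nat.card_eq_fintype_card, ← pow_mul, mul_comm, pow_mul] at h2
      have := Nat.le_log_of_pow_le hp2 h2
      exact Nat.lt_succ_of_le this
  obtain ⟨-, -, -, -, -, -, -, -, -, -, hG⟩ := counts (F := F)
  have hG' : Nat.card SL ≤ q ^ 3 := by omega
  have b0 : (P LL).ncard ≤ LL * (2 * q ^ 2) := pow_card LL LL_pos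
  have b1 : (P LL ×ˢ (Set.univ : Set SL)).ncard ≤ 2 * LL * q ^ 5 := by
    rw [Set.ncard_prod, Set.ncard_univ]
    calc _ ≤ LL * (2 * q ^ 2) * q ^ 3 := Nat.mul_le_mul b0 hG'
      _ = _ := by ring
  have b2 : ((Set.univ : Set SL) ×ˢ P LL).ncard ≤ 2 * LL * q ^ 5 := by
    rw [Set.ncard_prod, Set.ncard_univ]
    calc _ ≤ q ^ 3 * (LL * (2 * q ^ 2)) := Nat.mul_le_mul hG' b0
      _ = _ := by ring
  have b3 : (⋃ m ∈ (Finset.range (t + 1)).filter (fun m => 1 ≤ m),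
        P (2 * (p ^ m - 1)) ×ˢ P (2 * (p ^ m + 1))).ncard ≤ 64 * q ^ 5 := by
    refine (Finset.set_ncard_biUnion_le _ _).trans ?_
    have each : ∀ m ∈ (Finset.range (t + 1)).filter (fun m => 1 ≤ m),
        (P (2 * (p ^ m - 1)) ×ˢ P (2 * (p ^ m + 1))).ncard ≤ 32 * q ^ 4 * (p ^ 2) ^ m := by
      intro m hm
      have hm1 : 1 ≤ m := (Finset.mem_filter.1 hm).2
      have hpm : 1 < p ^ m := Nat.one_lt_pow (by omega) hp.one_lt
      rw [Set.ncard_prod]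
      have k1 : (P (2 * (p ^ m - 1))).ncard ≤ (2 * (p ^ m - 1)) * (2 * q ^ 2) :=
        pow_card _ (by omega)
      have k2 : (P (2 * (p ^ m + 1))).ncard ≤ (2 * (p ^ m + 1)) * (2 * q ^ 2) :=
        pow_card _ (by omega)
      have k1' : (P (2 * (p ^ m - 1))).ncard ≤ (2 * p ^ m) * (2 * q ^ 2) :=
        k1.trans (Nat.mul_le_mul_right _ (by omega))
      have k2' : (P (2 * (p ^ m + 1))).ncard ≤ (4 * p ^ m) * (2 * q ^ 2) :=
        k2.trans (Nat.mul_le_mul_right _ (by omega))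
      calc _ ≤ (2 * p ^ m) * (2 * q ^ 2) * ((4 * p ^ m) * (2 * q ^ 2)) := Nat.mul_le_mul k1' k2'
        _ = _ := by ring
    refine (Finset.sum_le_sum each).trans ?_
    rw [← Finset.mul_sum]
    have g1 : ∑ m ∈ (Finset.range (t + 1)).filter (fun m => 1 ≤ m), (p ^ 2) ^ m ≤ 2 * q := by
      refine (Finset.sum_le_sum_of_subset (Finset.filter_subset _ _)).trans ?_
      refine (geo _ t hp2).trans ?_
      exact Nat.mul_le_mul_left _ (Nat.pow_log_le_self _ hq.ne')
    calc _ ≤ 32 * q ^ 4 * (2 * q) := Nat.mul_le_mul_left _ g1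
      _ = _ := by ring
  have u1 := Set.ncard_le_ncard hsub (Set.toFinite _)
  have u2 := u1.trans (Set.ncard_union_le _ _)
  have u3 := Set.ncard_union_le (P LL ×ˢ (Set.univ : Set SL)) ((Set.univ : Set SL) ×ˢ P LL)
  calc _ ≤ _ := u2
    _ ≤ (2 * LL * q ^ 5 + 2 * LL * q ^ 5) + 64 * q ^ 5 := by
      apply Nat.add_le_add _ b3
      exact u3.trans (Nat.add_le_add b1 b2)
    _ = _ := by ring

set_option maxHeartbeats 1000000 in
lemma final : |({v : SL × SL | InvGen v.1 v.2}.ncard : ℝ) - (Nat.card SL : ℝ) ^ 2 / 2|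
    ≤ (2 * (8 * (LL : ℝ) + 200)) * (Nat.card SL : ℝ) ^ 2 / q := by
  obtain ⟨p, hpc⟩ := CharP.exists F
  have hpf : Fact p.Prime := ⟨(CharP.char_is_prime F p)⟩
  obtain ⟨n0, n1, n2, h1, h2, h3, h4, h5, h6, h7, h8⟩ := counts (F := F)
  have hb := bad_card (F := F) p
  have hq : 2 ≤ q := Fintype.one_lt_card
  have hdis : Disjoint (SS F ×ˢ NN F) (NN F ×ˢ SS F) := by
    rw [Set.disjoint_left]
    rintro ⟨x, y⟩ a b
    exact b.1 a.1.1
  have cm : ((SS F ×ˢ NN F) ∪ (NN F ×ˢ SS F)).ncard = 2 * ((SS F).ncard * (NN F).ncard) := by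
    rw [Set.ncard_union_eq hdis, Set.ncard_prod, Set.ncard_prod]; ring
  have up : {v : SL × SL | InvGen v.1 v.2}.ncard ≤ 2 * ((SS F).ncard * (NN F).ncard)
      + 2 * ((RR F).ncard * Nat.card SL) := by
    refine (Set.ncard_le_ncard upper (Set.toFinite _)).trans ?_
    refine (Set.ncard_union_le _ _).trans ?_
    rw [cm]
    apply Nat.add_le_add_left
    refine (Set.ncard_union_le _ _).trans ?_
    rw [Set.ncard_prod, Set.ncard_prod, Set.ncard_univ]
    apply le_of_eq; ring
  have lo : 2 * ((SS F).ncard * (NN F).ncard) ≤ {v : SL × SL | InvGen v.1 v.2}.ncard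
      + 2 * {v : SL × SL | Bad p v.1 v.2}.ncard := by
    rw [← cm]
    refine (Set.ncard_le_ncard (lower p) (Set.toFinite _)).trans ?_
    refine (Set.ncard_union_le _ _).trans ?_
    apply Nat.add_le_add_left
    refine (Set.ncard_union_le _ _).trans ?_
    have := Set.ncard_image_le (f := Prod.swap) (Set.toFinite {v : SL × SL | Bad p v.1 v.2})
    omega
  generalize {v : SL × SL | InvGen v.1 v.2}.ncard = I at *
  generalize {v : SL × SL | Bad p v.1 v.2}.ncard = B at *
  generalize (SS F).ncard = s at *
  generalize (NN F).ncard = nn at *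
  generalize (RR F).ncard = r at *
  generalize Nat.card SL = n at *
  generalize LL = L at *
  generalize q = Q at *
  clear h6
  have h1 : (n0 + n1 + n2 : ℝ) = Q := by exact_mod_cast h1
  have h2 : (2 * n2 + n1 + 1 : ℝ) = Q := by exact_mod_cast h2
  have h3 : (s : ℝ) = n2 * (Q ^ 2 + Q) := by exact_mod_cast h3
  have h4 : (nn + n0 * Q : ℝ) = n0 * Q ^ 2 := by exact_mod_cast h4
  have h5 : (r : ℝ) = n1 * Q ^ 2 := by exact_mod_cast h5
  have h7 : (n1 : ℝ) ≤ 2 := by exact_mod_cast h7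
  have h8 : (n + Q : ℝ) = Q ^ 3 := by exact_mod_cast h8
  have hb : (B : ℝ) ≤ (4 * L + 64) * Q ^ 5 := by exact_mod_cast hb
  have hq : (2 : ℝ) ≤ Q := by exact_mod_cast hq
  have up : (I : ℝ) ≤ 2 * (s * nn) + 2 * (r * n) := by exact_mod_cast up
  have lo : 2 * (s * nn : ℝ) ≤ I + 2 * B := by exact_mod_cast lo
  have hn1 : (0 : ℝ) ≤ n1 := by positivity
  have hL : (0 : ℝ) ≤ L := by positivity
  generalize (I : ℝ) = I at *
  generalize (B : ℝ) = B at *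
  generalize (s : ℝ) = s at *
  generalize (nn : ℝ) = nn at *
  generalize (r : ℝ) = r at *
  generalize (n : ℝ) = n at *
  generalize (L : ℝ) = L at *
  generalize (Q : ℝ) = Q at *
  generalize (n0 : ℝ) = n0 at *
  generalize (n1 : ℝ) = n1 at *
  generalize (n2 : ℝ) = n2 at *
  have en : n = Q ^ 3 - Q := by linarith
  have e2 : n2 = (Q - 1 - n1) / 2 := by linarith
  have e0 : n0 = (Q + 1 - n1) / 2 := by linarith
  have main : 2 * (s * nn) = n ^ 2 / 2 - (1 / 2) * Q ^ 2 * (Q ^ 2 - 1) * (n1 * (2 * Q - n1)) := by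
    have : nn = n0 * (Q ^ 2 - Q) := by linarith
    rw [this, h3, en, e2, e0]; ring
  have hQ0 : 0 < Q := by linarith
  have m1 : 0 ≤ n1 * (2 * Q - n1) := mul_nonneg hn1 (by linarith)
  have m2 : n1 * (2 * Q - n1) ≤ 4 * Q := by
    have : n1 * (2 * Q - n1) ≤ 2 * (2 * Q) := by
      apply mul_le_mul h7 (by linarith) (by linarith) (by norm_num)
    linarith
  have hQ2 : 0 ≤ Q ^ 2 - 1 := by nlinarith
  have m3 : 0 ≤ (1 / 2) * Q ^ 2 * (Q ^ 2 - 1) * (n1 * (2 * Q - n1)) := by positivity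
  have m4 : (1 / 2) * Q ^ 2 * (Q ^ 2 - 1) * (n1 * (2 * Q - n1)) ≤ 2 * Q ^ 5 := by
    calc _ ≤ (1 / 2) * Q ^ 2 * (Q ^ 2) * (4 * Q) := by
          apply mul_le_mul _ m2 m1 (by positivity)
          apply mul_le_mul_of_nonneg_left (by linarith) (by positivity)
      _ = _ := by ring
  have hn0 : 0 ≤ n := by rw [en]; nlinarith [mul_nonneg hQ0.le hQ2]
  have m5 : r * n ≤ 2 * Q ^ 5 := by
    rw [h5]
    calc n1 * Q ^ 2 * n ≤ 2 * Q ^ 2 * Q ^ 3 := by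
          apply mul_le_mul _ (by linarith) hn0 (by positivity)
          apply mul_le_mul_of_nonneg_right h7 (by positivity)
      _ = _ := by ring
  have hQ5 : 0 ≤ Q ^ 5 := by positivity
  have hLQ : 0 ≤ L * Q ^ 5 := by positivity
  have abs_le' : |I - n ^ 2 / 2| ≤ (8 * L + 200) * Q ^ 5 := by
    rw [abs_le]
    constructor
    · linarith
    · linarith
  refine abs_le'.trans ?_
  rw [le_div_iff₀ hQ0]
  have m6 : (3 / 4) * Q ^ 3 ≤ n := by
    have : 0 ≤ Q * ((1 / 4) * Q ^ 2 - 1) := mul_nonneg hQ0.le (by nlinarith)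
    rw [en]; linarith
  have m7 : ((3 / 4) * Q ^ 3) ^ 2 ≤ n ^ 2 := pow_le_pow_left₀ (by positivity) m6 2
  have m8 : Q ^ 6 ≤ 2 * n ^ 2 := by
    have : 0 ≤ Q ^ 6 := by positivity
    linarith
  calc (8 * L + 200) * Q ^ 5 * Q = (8 * L + 200) * Q ^ 6 := by ring
    _ ≤ (8 * L + 200) * (2 * n ^ 2) := by
      apply mul_le_mul_of_nonneg_left m8 (by positivity)
    _ = _ := by ring

end fin
end IG

theorem stmt_4 :
    ∃ C : ℝ, 0 < C ∧
      ∀ (F : Type) [Field F] [Fintype F],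
        |(Nat.card {p : Matrix.SpecialLinearGroup (Fin 2) F ×
              Matrix.SpecialLinearGroup (Fin 2) F // InvGen p.1 p.2} : ℝ) -
            (Nat.card (Matrix.SpecialLinearGroup (Fin 2) F) : ℝ) ^ 2 / 2| ≤
          C * (Nat.card (Matrix.SpecialLinearGroup (Fin 2) F) : ℝ) ^ 2 /
            Fintype.card F := by
  refine ⟨2 * (8 * (IG.LL : ℝ) + 200), by positivity, ?_⟩
  intro F _ _
  exact IG.final (F := F)
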